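/- arXiv:1204.2436 — 12 statements merged into one kernel-verified Lean document; each statement's English description precedes it below -/
import Mathlib

section
/- Let M be an m×n entrywise nonnegative real matrix and Q an invertible n×n real matrix whose inverse Q⁻¹ is entrywise nonnegative, and set M' = MQ. Then for any entrywise nonnegative matrices U ∈ ℝ^{m×r} and V' ∈ ℝ^{r×n}, the matrix V = V'Q⁻¹ is entrywise nonnegative and ‖M − UV‖_F ≤ ‖M' − UV'‖_F · ‖Q⁻¹‖₂, where ‖·‖_F is the Frobenius norm and ‖·‖₂ is the spectral (operator 2-) norm. In particular, if M' = UV' exactly then M = UV exactly. -/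
open Matrix BigOperators

/-- The column `j` of `M` normalized to unit ℓ₁-norm. -/
noncomputable def normCol {m n : ℕ} (M : Matrix (Fin m) (Fin n) ℝ) (j : Fin n) : Fin m → ℝ :=
  (∑ i, |M i j|)⁻¹ • fun i => M i j

/-- Column `j` of `M` is nonzero. -/
def colNZ {m n : ℕ} (M : Matrix (Fin m) (Fin n) ℝ) (j : Fin n) : Prop :=
  (fun i => M i j) ≠ 0

/-- `θ(M)`: the set of ℓ₁-normalized nonzero columns of `M`. -/
noncomputable def thetaCols {m n : ℕ} (M : Matrix (Fin m) (Fin n) ℝ) : Set (Fin m → ℝ) :=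
  {x | ∃ j, colNZ M j ∧ x = normCol M j}

/-- The nonnegative rank of `M`. -/
noncomputable def nnRank {m n : ℕ} (M : Matrix (Fin m) (Fin n) ℝ) : ℕ :=
  sInf {r : ℕ | ∃ U : Matrix (Fin m) (Fin r) ℝ, ∃ V : Matrix (Fin r) (Fin n) ℝ,
    (∀ i j, 0 ≤ U i j) ∧ (∀ i j, 0 ≤ V i j) ∧ M = U * V}

/-- The squared Frobenius norm. -/
noncomputable def frobSq {m n : ℕ} (A : Matrix (Fin m) (Fin n) ℝ) : ℝ :=
  ∑ i, ∑ j, (A i j) ^ 2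

/-- Feasibility for problem (tigrel): `B ≥ 0`, zero diagonal, `MB ≤ M` entrywise. -/
def TigrelFeasible {m n : ℕ} (M : Matrix (Fin m) (Fin n) ℝ)
    (B : Matrix (Fin n) (Fin n) ℝ) : Prop :=
  (∀ i j, 0 ≤ B i j) ∧ (∀ i, B i i = 0) ∧ ∀ i j, (M * B) i j ≤ M i j

/-- Optimality for problem (tigrel): feasible and minimizes `‖M - MB‖_F²`. -/
def TigrelOpt {m n : ℕ} (M : Matrix (Fin m) (Fin n) ℝ)
    (B : Matrix (Fin n) (Fin n) ℝ) : Prop :=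
  TigrelFeasible M B ∧
    ∀ B', TigrelFeasible M B' → frobSq (M - M * B) ≤ frobSq (M - M * B')

/-- A monomial matrix: permutation of a diagonal matrix with positive diagonal. -/
def IsMonomial {k : ℕ} (P : Matrix (Fin k) (Fin k) ℝ) : Prop :=
  ∃ (σ : Equiv.Perm (Fin k)) (d : Fin k → ℝ), (∀ i, 0 < d i) ∧
    ∀ i j, P i j = if i = σ j then d j else 0

/-- Every extreme point of `conv(θ(M))` equals `θ(M_{:j})` for exactly one column `j`. -/
def NonRepeatedVertices {m n : ℕ} (M : Matrix (Fin m) (Fin n) ℝ) : Prop :=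
  ∀ x ∈ Set.extremePoints ℝ (convexHull ℝ (thetaCols M)),
    ∃! j : Fin n, colNZ M j ∧ x = normCol M j

/-- Uniqueness of size-`r` exact NMF up to permutation and scaling. -/
def UniqueNMF {m n : ℕ} (r : ℕ) (M : Matrix (Fin m) (Fin n) ℝ) : Prop :=
  ∀ (U₁ U₂ : Matrix (Fin m) (Fin r) ℝ) (V₁ V₂ : Matrix (Fin r) (Fin n) ℝ),
    (∀ i j, 0 ≤ U₁ i j) → (∀ i j, 0 ≤ V₁ i j) →
    (∀ i j, 0 ≤ U₂ i j) → (∀ i j, 0 ≤ V₂ i j) →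
    M = U₁ * V₁ → M = U₂ * V₂ →
    ∃ P : Matrix (Fin r) (Fin r) ℝ, IsMonomial P ∧ U₂ = U₁ * P ∧ V₂ = P⁻¹ * V₁

/-- Separability of a factorization, expressed as a property of the right factor `V`. -/
def SeparableFactor {r n : ℕ} (V : Matrix (Fin r) (Fin n) ℝ) : Prop :=
  ∀ i : Fin r, ∃ j : Fin n, V i j ≠ 0 ∧ ∀ i' : Fin r, i' ≠ i → V i' j = 0

/-- The Frobenius norm. -/
noncomputable def frobNorm {m n : ℕ} (A : Matrix (Fin m) (Fin n) ℝ) : ℝ :=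
  Real.sqrt (∑ i, ∑ j, (A i j) ^ 2)

/-- The Euclidean (ℓ₂) norm of a vector. -/
noncomputable def vecNorm2 {n : ℕ} (x : Fin n → ℝ) : ℝ :=
  Real.sqrt (∑ i, (x i) ^ 2)

/-- The spectral (operator 2-) norm of a matrix. -/
noncomputable def specNorm {m n : ℕ} (A : Matrix (Fin m) (Fin n) ℝ) : ℝ :=
  sSup {c : ℝ | ∃ x : Fin n → ℝ, vecNorm2 x ≤ 1 ∧ c = vecNorm2 (A.mulVec x)}

open scoped Matrix.Norms.L2Operator in
lemma vecNorm2_eq_aux {n : ℕ} (x : Fin n → ℝ) : vecNorm2 x = ‖WithLp.toLp 2 x‖ := by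
  simp [vecNorm2, EuclideanSpace.norm_eq]

open scoped Matrix.Norms.L2Operator in
lemma specNorm_eq_aux {n : ℕ} (A : Matrix (Fin n) (Fin n) ℝ) : specNorm A = ‖A‖ := by
  rw [← l2_opNorm_toEuclideanCLM, ← ContinuousLinearMap.sSup_unitClosedBall_eq_norm]
  unfold specNorm
  congr 1
  ext c
  simp only [Set.mem_setOf_eq, Set.mem_image, Metric.mem_closedBall, dist_zero_right,
    vecNorm2_eq_aux]
  constructor
  · rintro ⟨x, hx, rfl⟩
    exact ⟨WithLp.toLp 2 x, hx, by rw [toEuclideanCLM_toLp]⟩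
  · rintro ⟨x, hx, rfl⟩
    exact ⟨x.ofLp, hx, by rw [← toEuclideanCLM_toLp]⟩

open scoped Matrix.Norms.L2Operator in
lemma vecMul_bound_aux {n : ℕ} (A : Matrix (Fin n) (Fin n) ℝ) (x : Fin n → ℝ) :
    vecNorm2 (x ᵥ* A) ≤ vecNorm2 x * specNorm A := by
  rw [specNorm_eq_aux, ← l2_opNorm_conjTranspose, vecNorm2_eq_aux, vecNorm2_eq_aux, mul_comm,
    ← mulVec_transpose, conjTranspose_eq_transpose_of_trivial]
  exact l2_opNorm_mulVec Aᵀ (WithLp.toLp 2 x)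

lemma frob_bound_aux {m n : ℕ} (R : Matrix (Fin m) (Fin n) ℝ) (A : Matrix (Fin n) (Fin n) ℝ) :
    frobNorm (R * A) ≤ frobNorm R * specNorm A := by
  have h0 : 0 ≤ specNorm A := by
    apply Real.sSup_nonneg
    rintro c ⟨x, -, rfl⟩
    exact Real.sqrt_nonneg _
  unfold frobNorm
  apply Real.sqrt_le_iff.2
  refine ⟨by positivity, ?_⟩
  rw [mul_pow, Real.sq_sqrt (by positivity), Finset.sum_mul]
  refine Finset.sum_le_sum fun i _ => ?_
  have h := vecMul_bound_aux A (R i)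
  have h2 := pow_le_pow_left₀ (Real.sqrt_nonneg _) h 2
  unfold vecNorm2 at h2
  rw [mul_pow, Real.sq_sqrt (by positivity), Real.sq_sqrt (by positivity)] at h2
  exact h2

/-- If `Q` is inverse positive and `M' = MQ`, then for nonnegative `U, V'`,
`V = V'Q⁻¹` is nonnegative, `‖M − UV‖_F ≤ ‖M' − UV'‖_F ⬝ ‖Q⁻¹‖₂`, and an exact
factorization of `M'` yields an exact factorization of `M`. -/
theorem stmt0 {m n r : ℕ} (M : Matrix (Fin m) (Fin n) ℝ) (Q : Matrix (Fin n) (Fin n) ℝ)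
    (hM : ∀ i j, 0 ≤ M i j) (hQ : IsUnit Q.det) (hQinv : ∀ i j, 0 ≤ Q⁻¹ i j)
    (M' : Matrix (Fin m) (Fin n) ℝ) (hM' : M' = M * Q)
    (U : Matrix (Fin m) (Fin r) ℝ) (V' : Matrix (Fin r) (Fin n) ℝ)
    (hU : ∀ i j, 0 ≤ U i j) (hV' : ∀ i j, 0 ≤ V' i j) :
    (∀ i j, 0 ≤ (V' * Q⁻¹) i j) ∧
    frobNorm (M - U * (V' * Q⁻¹)) ≤ frobNorm (M' - U * V') * specNorm Q⁻¹ ∧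
    (M' = U * V' → M = U * (V' * Q⁻¹)) := by
  have key : M = M' * Q⁻¹ := by rw [hM', Matrix.mul_nonsing_inv_cancel_right _ _ hQ]
  refine ⟨fun i j => ?_, ?_, fun h => ?_⟩
  · rw [Matrix.mul_apply]
    exact Finset.sum_nonneg fun k _ => mul_nonneg (hV' i k) (hQinv k j)
  · have : M - U * (V' * Q⁻¹) = (M' - U * V') * Q⁻¹ := by
      rw [Matrix.sub_mul, ← key, Matrix.mul_assoc]
    rw [this]
    exact frob_bound_aux _ _
  · rw [← Matrix.mul_assoc, ← h]
    exact key
end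

section
/- Let M ∈ ℝ^{m×n} be entrywise nonnegative with no all-zero column and with r = rank(M) = rank₊(M). If r columns of θ(M) coincide with r distinct extreme points of Δ^m ∩ col(θ(M)), where col(θ(M)) denotes the linear span of the columns of θ(M), then the exact NMF of M of size r is unique up to permutation and scaling: for any two factorizations M = U₁V₁ = U₂V₂ with U₁, U₂ ∈ ℝ^{m×r} and V₁, V₂ ∈ ℝ^{r×n} all entrywise nonnegative, there exists a monomial matrix P with U₂ = U₁P and V₂ = P⁻¹V₁. -/
open Matrix BigOperators

theorem aux_range {m n r : ℕ} (M : Matrix (Fin m) (Fin n) ℝ) (hrank : M.rank = r)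
    (U : Matrix (Fin m) (Fin r) ℝ) (V : Matrix (Fin r) (Fin n) ℝ) (h : M = U * V) :
    LinearMap.range M.mulVecLin = LinearMap.range U.mulVecLin ∧ U.rank = r := by
  have hU : U.rank = r := by
    apply le_antisymm
    · simpa using U.rank_le_width
    · have h0 := Matrix.rank_mul_le_left U V
      rw [← h] at h0
      exact hrank.symm.le.trans h0
  refine ⟨?_, hU⟩
  apply Submodule.eq_of_le_of_finrank_eq
  · rw [h, Matrix.mulVecLin_mul]
    exact LinearMap.range_comp_le_range _ _
  · change M.rank = U.rank
    rw [hU, hrank]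

theorem aux_inj {m n r : ℕ} (U : Matrix (Fin m) (Fin r) ℝ) (hU : U.rank = r)
    (A B : Matrix (Fin r) (Fin n) ℝ) (h : U * A = U * B) : A = B := by
  have h1 := LinearMap.finrank_range_add_finrank_ker U.mulVecLin
  have h2 : Module.finrank ℝ (LinearMap.range U.mulVecLin) = r := hU
  rw [h2] at h1
  have h3 : Module.finrank ℝ (LinearMap.ker U.mulVecLin) = 0 := by
    simp at h1; simpa using h1
  have h4 : LinearMap.ker U.mulVecLin = ⊥ := Submodule.finrank_eq_zero.1 h3
  have h5 := LinearMap.ker_eq_bot.1 h4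
  ext i j
  have : (fun i => A i j) = fun i => B i j := by
    apply h5
    ext a
    exact congrFun (congrFun h a) j
  exact congrFun this i

theorem aux_key {m n r : ℕ} (M : Matrix (Fin m) (Fin n) ℝ)
    (hM : ∀ i j, 0 ≤ M i j) (hnz : ∀ j, colNZ M j)
    (hrank : M.rank = r)
    (U : Matrix (Fin m) (Fin r) ℝ) (V : Matrix (Fin r) (Fin n) ℝ)
    (hU : ∀ i j, 0 ≤ U i j) (hV : ∀ i j, 0 ≤ V i j) (h : M = U * V) (j : Fin n)
    (hext : normCol M j ∈ Set.extremePoints ℝ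
      (stdSimplex ℝ (Fin m) ∩ (Submodule.span ℝ (thetaCols M) : Set (Fin m → ℝ)))) :
    ∃ l : Fin r, ∃ c : ℝ, 0 < c ∧ c = ∑ i, U i l ∧ ∀ i, U i l = c * normCol M j i := by
  have hspan : ∀ l, (fun i => U i l) ∈ Submodule.span ℝ (thetaCols M) := by
    intro l
    have h1 : (fun i => U i l) ∈ LinearMap.range U.mulVecLin :=
      ⟨Pi.single l 1, by ext i; simp⟩
    rw [← (aux_range M hrank U V h).1, Matrix.range_mulVecLin] at h1
    refine (Submodule.span_le.2 ?_) h1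
    rintro _ ⟨k, rfl⟩
    have hs : (∑ i, |M i k|) ≠ 0 := by
      intro h0
      apply hnz k
      ext i
      have := (Finset.sum_eq_zero_iff_of_nonneg (fun i _ => abs_nonneg (M i k))).1 h0 i
        (Finset.mem_univ _)
      simpa using this
    have : M.col k = (∑ i, |M i k|) • normCol M k := by
      rw [normCol, smul_smul, mul_inv_cancel₀ hs, one_smul]; rfl
    rw [this]
    exact Submodule.smul_mem _ _ (Submodule.subset_span ⟨k, hnz k, rfl⟩)
  obtain ⟨⟨⟨hx0, hx1⟩, hxs⟩, hx⟩ := hext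
  set x := normCol M j with hxdef
  set w : Fin r → ℝ := fun l => (∑ i, |M i j|)⁻¹ * V l j with hw
  have hw0 : ∀ l, 0 ≤ w l := fun l =>
    mul_nonneg (inv_nonneg.2 (Finset.sum_nonneg fun i _ => abs_nonneg _)) (hV l j)
  have hxw : ∀ i, x i = ∑ l, w l * U i l := by
    intro i
    have : M i j = ∑ l, U i l * V l j := by rw [h]; rfl
    simp only [hxdef, normCol, Pi.smul_apply, smul_eq_mul, hw]
    rw [this, Finset.mul_sum]
    exact Finset.sum_congr rfl fun l _ => by ring
  have hsum : ∑ l, w l * ∑ i, U i l = 1 := by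
    rw [← hx1]
    simp_rw [hxw, Finset.mul_sum]
    rw [Finset.sum_comm]
  have hu0 : ∀ l, 0 ≤ ∑ i, U i l := fun l => Finset.sum_nonneg fun i _ => hU i l
  obtain ⟨l, hl⟩ : ∃ l, 0 < w l * ∑ i, U i l := by
    by_contra! hc
    have := Finset.sum_nonpos (s := Finset.univ) fun l _ => hc l
    linarith
  have hule : ∀ i, w l * U i l ≤ x i := fun i => by
    rw [hxw]
    exact Finset.single_le_sum (f := fun l => w l * U i l)
      (fun l _ => mul_nonneg (hw0 l) (hU i l)) (Finset.mem_univ l)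
  set s := ∑ i, U i l with hs
  set t := w l * s with ht
  have hspos : 0 < s := by
    rcases (hu0 l).lt_or_eq with h' | h'
    · exact h'
    · rw [ht, hs, ← h'] at hl; simp at hl
  have htle : t ≤ 1 := by
    rw [← hsum]
    exact Finset.single_le_sum (f := fun l => w l * ∑ i, U i l)
      (fun l _ => mul_nonneg (hw0 l) (hu0 l)) (Finset.mem_univ l)
  have hsumd : ∑ i, (x i - w l * U i l) = 1 - t := by
    rw [Finset.sum_sub_distrib, hx1, ← Finset.mul_sum]
  refine ⟨l, s, hspos, rfl, ?_⟩
  rcases htle.lt_or_eq with hlt | heq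
  · set y : Fin m → ℝ := s⁻¹ • fun i => U i l with hy
    set z : Fin m → ℝ := (1 - t)⁻¹ • (x - w l • fun i => U i l) with hz
    have hpos : 0 < 1 - t := by linarith
    have hyx : y = x := by
      refine hx (x₂ := z) ⟨⟨?_, ?_⟩, ?_⟩ ⟨⟨?_, ?_⟩, ?_⟩ ⟨t, 1 - t, hl, hpos, by ring, ?_⟩
      · intro i
        exact mul_nonneg (inv_nonneg.2 hspos.le) (hU i l)
      · simp only [hy, Pi.smul_apply, smul_eq_mul]
        rw [← Finset.mul_sum]
        exact inv_mul_cancel₀ hspos.ne'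
      · exact Submodule.smul_mem _ _ (hspan l)
      · intro i
        exact mul_nonneg (inv_nonneg.2 hpos.le) (sub_nonneg.2 (hule i))
      · simp only [hz, Pi.smul_apply, Pi.sub_apply, smul_eq_mul]
        rw [← Finset.mul_sum, hsumd]
        exact inv_mul_cancel₀ hpos.ne'
      · exact Submodule.smul_mem _ _ (Submodule.sub_mem _ hxs (Submodule.smul_mem _ _ (hspan l)))
      · rw [hz, hy, smul_smul, smul_smul, mul_inv_cancel₀ hpos.ne', one_smul, ht, mul_assoc,
          mul_inv_cancel₀ hspos.ne', mul_one]
        abel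
    intro i
    rw [← hyx]
    simp only [hy, Pi.smul_apply, smul_eq_mul]
    rw [← mul_assoc, mul_inv_cancel₀ hspos.ne', one_mul]
  · intro i
    rw [heq, sub_self] at hsumd
    have h0 := (Finset.sum_eq_zero_iff_of_nonneg
      (fun i _ => sub_nonneg.2 (hule i))).1 hsumd i (Finset.mem_univ _)
    have : x i = w l * U i l := by linarith
    rw [this, ← mul_assoc, mul_comm s, ← ht, heq, one_mul]

theorem aux_perm {m n r : ℕ} (M : Matrix (Fin m) (Fin n) ℝ)
    (hM : ∀ i j, 0 ≤ M i j) (hnz : ∀ j, colNZ M j)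
    (hrank : M.rank = r)
    (f : Fin r → Fin n)
    (hinj : Function.Injective fun k => normCol M (f k))
    (hext : ∀ k, normCol M (f k) ∈ Set.extremePoints ℝ
      (stdSimplex ℝ (Fin m) ∩ (Submodule.span ℝ (thetaCols M) : Set (Fin m → ℝ))))
    (U : Matrix (Fin m) (Fin r) ℝ) (V : Matrix (Fin r) (Fin n) ℝ)
    (hU : ∀ i j, 0 ≤ U i j) (hV : ∀ i j, 0 ≤ V i j) (h : M = U * V) :
    ∃ (σ : Equiv.Perm (Fin r)) (c : Fin r → ℝ), (∀ k, 0 < c k) ∧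
      ∀ i k, U i (σ k) = c k * normCol M (f k) i := by
  choose g c hc hcs hg using fun k => aux_key M hM hnz hrank U V hU hV h (f k) (hext k)
  have hgi : Function.Injective g := by
    intro a b hab
    apply hinj
    have hcc : c a = c b := by rw [hcs, hcs, hab]
    ext i
    have h1 := hg a i
    rw [hab, hg b i, hcc] at h1
    exact (mul_left_cancel₀ (hc b).ne' h1).symm
  exact ⟨Equiv.ofBijective g (Finite.injective_iff_bijective.1 hgi), c, hc,
    fun i k => hg k i⟩

/-- if `r = rank(M) = rank₊(M)` and `r` columns of `θ(M)` coincide with `r`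
distinct extreme points of `Δ^m ∩ col(θ(M))`, then the exact NMF of `M` of size `r`
is unique up to permutation and scaling. -/
theorem stmt1 {m n r : ℕ} (M : Matrix (Fin m) (Fin n) ℝ)
    (hM : ∀ i j, 0 ≤ M i j) (hnz : ∀ j, colNZ M j)
    (hrank : M.rank = r) (hnnrank : nnRank M = r)
    (f : Fin r → Fin n)
    (hinj : Function.Injective fun k => normCol M (f k))
    (hext : ∀ k, normCol M (f k) ∈ Set.extremePoints ℝ
      (stdSimplex ℝ (Fin m) ∩ (Submodule.span ℝ (thetaCols M) : Set (Fin m → ℝ)))) :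
    UniqueNMF r M := by
  intro U₁ U₂ V₁ V₂ hU₁ hV₁ hU₂ hV₂ h₁ h₂
  obtain ⟨σ, c, hc, hσ⟩ := aux_perm M hM hnz hrank f hinj hext U₁ V₁ hU₁ hV₁ h₁
  obtain ⟨τ, e, he, hτ⟩ := aux_perm M hM hnz hrank f hinj hext U₂ V₂ hU₂ hV₂ h₂
  let ρ : Equiv.Perm (Fin r) := τ.symm.trans σ
  let d : Fin r → ℝ := fun j => e (τ.symm j) / c (τ.symm j)
  have hd : ∀ j, 0 < d j := fun j => div_pos (he _) (hc _)
  let P : Matrix (Fin r) (Fin r) ℝ := Matrix.of fun i j => if i = ρ j then d j else 0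
  let Q : Matrix (Fin r) (Fin r) ℝ := Matrix.of fun i j => if j = ρ i then (d i)⁻¹ else 0
  have hQP : Q * P = 1 := by
    ext i j
    simp only [Matrix.mul_apply, P, Q, Matrix.of_apply, ite_mul, zero_mul, Finset.sum_ite_eq',
      Finset.sum_ite_eq, Finset.mem_univ, if_true, EmbeddingLike.apply_eq_iff_eq]
    by_cases hij : i = j
    · subst hij
      simp [(hd i).ne']
    · simp [hij]
  have hUP : U₂ = U₁ * P := by
    ext i j
    simp only [Matrix.mul_apply, P, Matrix.of_apply, mul_ite, mul_zero, Finset.sum_ite_eq',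
      Finset.sum_ite_eq, Finset.mem_univ, if_true]
    have a := hσ i (τ.symm j)
    have b := hτ i (τ.symm j)
    rw [Equiv.apply_symm_apply] at b
    change U₂ i j = U₁ i (σ (τ.symm j)) * (e (τ.symm j) / c (τ.symm j))
    rw [a, b]
    have := (hc (τ.symm j)).ne'
    field_simp
  refine ⟨P, ⟨ρ, d, hd, fun i j => rfl⟩, hUP, ?_⟩
  have hPV : P * V₂ = V₁ := by
    apply aux_inj U₁ (aux_range M hrank U₁ V₁ h₁).2
    rw [← Matrix.mul_assoc, ← hUP, ← h₂, h₁]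
  rw [Matrix.inv_eq_left_inv hQP, ← hPV, ← Matrix.mul_assoc, hQP, Matrix.one_mul]
end

section
/- Let U ∈ ℝ^{m×r} be entrywise nonnegative and let k ≠ l be column indices such that U_{:k} ≠ 0 and the support of U_{:k} is contained in the support of U_{:l}. Then there exists an invertible r×r matrix D such that D⁻¹ is entrywise nonnegative, UD is entrywise nonnegative, and for some row index p̄ one has U_{p̄ l} > 0 while (UD)_{p̄ l} = 0. Consequently, for any entrywise nonnegative V ∈ ℝ^{r×n}, the pair (UD, D⁻¹V) is an exact NMF of M = UV whose first factor has a sparsity pattern different from that of U. -/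
open Matrix BigOperators

/-- if the support of a nonzero column `U_{:k}` is contained in the support
of `U_{:l}` (`k ≠ l`), there is an invertible `D` with `D⁻¹ ≥ 0`, `UD ≥ 0`, killing some
positive entry of `U_{:l}`; consequently `(UD, D⁻¹V)` is an exact NMF of `UV` for every
nonnegative `V`, with a different sparsity pattern for the first factor. -/
theorem stmt5 {m r : ℕ} (U : Matrix (Fin m) (Fin r) ℝ) (hU : ∀ i j, 0 ≤ U i j)
    (k l : Fin r) (hkl : k ≠ l) (hknz : (fun i => U i k) ≠ 0)
    (hsupp : ∀ i, U i k ≠ 0 → U i l ≠ 0) :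
    ∃ D : Matrix (Fin r) (Fin r) ℝ, IsUnit D.det ∧
      (∀ i j, 0 ≤ D⁻¹ i j) ∧
      (∀ i j, 0 ≤ (U * D) i j) ∧
      (∃ p : Fin m, 0 < U p l ∧ (U * D) p l = 0) ∧
      ∀ (n : ℕ) (V : Matrix (Fin r) (Fin n) ℝ), (∀ i j, 0 ≤ V i j) →
        (∀ i j, 0 ≤ (D⁻¹ * V) i j) ∧ (U * D) * (D⁻¹ * V) = U * V := by
  obtain ⟨q, hq⟩ := Function.ne_iff.mp hknz
  have hq' : U q k ≠ 0 := hq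
  obtain ⟨p, hp, hmin⟩ := Finset.exists_min_image
    (Finset.univ.filter fun i => U i k ≠ 0) (fun i => U i l / U i k) ⟨q, by simpa using hq'⟩
  have hpk0 : U p k ≠ 0 := by simpa using hp
  have hpk : 0 < U p k := lt_of_le_of_ne (hU p k) hpk0.symm
  have hpl : 0 < U p l := lt_of_le_of_ne (hU p l) (hsupp p hpk0).symm
  set c : ℝ := U p l / U p k with hc
  have hc0 : 0 < c := div_pos hpl hpk
  have hinv : (transvection k l (-c))⁻¹ = transvection k l c := by
    apply Matrix.inv_eq_right_inv
    rw [transvection_mul_transvection_same k l hkl]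
    simp
  have hdet : IsUnit (transvection k l (-c)).det := by
    rw [det_transvection_of_ne k l hkl]; exact isUnit_one
  have hnn : ∀ i j, 0 ≤ (transvection k l (-c))⁻¹ i j := by
    intro i j
    rw [hinv]
    simp only [transvection, Matrix.add_apply, Matrix.one_apply, Matrix.single_apply]
    split_ifs <;> linarith
  refine ⟨transvection k l (-c), hdet, hnn, ?_, ⟨p, hpl, ?_⟩, ?_⟩
  · intro i j
    by_cases hj : j = l
    · subst hj
      rw [mul_transvection_apply_same]
      by_cases hik : U i k = 0
      · rw [hik]; simpa using hU i j
      · have h1 := hmin i (by simpa using hik)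
        have hik' : 0 < U i k := lt_of_le_of_ne (hU i k) (Ne.symm hik)
        have h2 : c * U i k ≤ U i j := (le_div_iff₀ hik').mp h1
        linarith
    · rw [mul_transvection_apply_of_ne _ _ _ _ hj]; exact hU i j
  · rw [mul_transvection_apply_same, hc]
    field_simp
    ring
  · intro n V hV
    refine ⟨fun i j => ?_, ?_⟩
    · rw [Matrix.mul_apply]
      exact Finset.sum_nonneg fun x _ => mul_nonneg (hnn i x) (hV x j)
    · rw [Matrix.mul_assoc, Matrix.mul_nonsing_inv_cancel_left _ _ hdet]
end

section
/- Let M ∈ ℝ^{m×n} be entrywise nonnegative. Then for any two optimal solutions B₁* and B₂* of problem (tigrel) for M, one has MB₁* = MB₂*, i.e., M(I − B₁*) = M(I − B₂*). Hence the preprocessed matrix P(M) is well-defined. -/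
open Matrix BigOperators

/-- the preprocessing is well-defined, i.e. any two optimal solutions of
(tigrel) yield the same matrix `MB`, hence the same `P(M) = M(I − B*)`. -/
theorem stmt6 {m n : ℕ} (M : Matrix (Fin m) (Fin n) ℝ) (hM : ∀ i j, 0 ≤ M i j)
    (B₁ B₂ : Matrix (Fin n) (Fin n) ℝ)
    (h₁ : TigrelOpt M B₁) (h₂ : TigrelOpt M B₂) :
    M * B₁ = M * B₂ ∧ M * (1 - B₁) = M * (1 - B₂) := by
  have key : M * B₁ = M * B₂ := by
    set C : Matrix (Fin n) (Fin n) ℝ := (1/2 : ℝ) • (B₁ + B₂) with hC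
    have hMC : ∀ i j, (M * C) i j = ((M * B₁) i j + (M * B₂) i j) / 2 := by
      intro i j
      rw [hC, Matrix.mul_smul, Matrix.mul_add, Matrix.smul_apply, Matrix.add_apply, smul_eq_mul]
      ring
    have hf : TigrelFeasible M C := by
      obtain ⟨⟨a1, a2, a3⟩, -⟩ := h₁
      obtain ⟨⟨b1, b2, b3⟩, -⟩ := h₂
      refine ⟨fun i j => ?_, fun i => ?_, fun i j => ?_⟩
      · have := a1 i j
        have := b1 i j
        simp only [hC, Matrix.smul_apply, Matrix.add_apply, smul_eq_mul]
        linarith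
      · simp [hC, a2, b2]
      · rw [hMC]
        linarith [a3 i j, b3 i j]
    have e1 := h₁.2 C hf
    have e2 := h₂.2 C hf
    have id : frobSq (M * B₁ - M * B₂) = 2 * frobSq (M - M * B₁) + 2 * frobSq (M - M * B₂)
        - 4 * frobSq (M - M * C) := by
      simp only [frobSq, Finset.mul_sum, ← Finset.sum_add_distrib, ← Finset.sum_sub_distrib,
        Matrix.sub_apply, hMC]
      refine Finset.sum_congr rfl fun i _ => Finset.sum_congr rfl fun j _ => ?_
      ring
    have hle : frobSq (M * B₁ - M * B₂) ≤ 0 := by linarith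
    have h0 : frobSq (M * B₁ - M * B₂) = 0 :=
      le_antisymm hle (Finset.sum_nonneg fun i _ => Finset.sum_nonneg fun j _ => sq_nonneg _)
    ext i j
    unfold frobSq at h0
    have h2 := (Finset.sum_eq_zero_iff_of_nonneg
      (fun i _ => Finset.sum_nonneg fun j _ => sq_nonneg ((M * B₁ - M * B₂) i j))).1 h0 i
      (Finset.mem_univ _)
    have h3 := (Finset.sum_eq_zero_iff_of_nonneg
      (fun j _ => sq_nonneg ((M * B₁ - M * B₂) i j))).1 h2
    have h4 := pow_eq_zero_iff (two_ne_zero) |>.1 (h3 j (Finset.mem_univ _))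
    rw [Matrix.sub_apply] at h4
    linarith
  exact ⟨key, by rw [Matrix.mul_sub, Matrix.mul_sub, key]⟩
end

section
/- Let M ∈ ℝ^{m×n} be entrywise nonnegative and P an n×n monomial matrix. Then B is an optimal solution of problem (tigrel) for M if and only if P⁻¹BP is an optimal solution of problem (tigrel) for MP, i.e., B ∈ B*(M) ⇔ P⁻¹BP ∈ B*(MP). Consequently, the preprocessing is invariant to permutation and scaling of the columns: P(MP) = P(M)P. -/
open Matrix BigOperators

theorem mono_mul_apply {m n : ℕ} (A : Matrix (Fin m) (Fin n) ℝ) (P : Matrix (Fin n) (Fin n) ℝ)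
    (σ : Equiv.Perm (Fin n)) (d : Fin n → ℝ)
    (hP : ∀ i j, P i j = if i = σ j then d j else 0) (i : Fin m) (j : Fin n) :
    (A * P) i j = A i (σ j) * d j := by
  simp [Matrix.mul_apply, hP]

theorem mono_inv {n : ℕ} (P : Matrix (Fin n) (Fin n) ℝ)
    (σ : Equiv.Perm (Fin n)) (d : Fin n → ℝ) (hd : ∀ i, 0 < d i)
    (hP : ∀ i j, P i j = if i = σ j then d j else 0) :
    P * P⁻¹ = 1 ∧ P⁻¹ * P = 1 ∧ ∀ i j, P⁻¹ i j = if j = σ i then (d i)⁻¹ else 0 := by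
  let Q : Matrix (Fin n) (Fin n) ℝ := fun i j => if j = σ i then (d i)⁻¹ else 0
  have h1 : Q * P = 1 := by
    ext i j
    rw [mono_mul_apply Q P σ d hP]
    by_cases h : i = j
    · subst h
      simp [Q, (hd i).ne']
    · have h' : ¬ j = i := fun e => h e.symm
      simp [Q, Matrix.one_apply, h, h']
  have h2 : P * Q = 1 := mul_eq_one_comm.mp h1
  have h3 : P⁻¹ = Q := Matrix.inv_eq_right_inv h2
  rw [h3]
  exact ⟨h2, h1, fun i j => rfl⟩

theorem isMonomial_inv {n : ℕ} (P : Matrix (Fin n) (Fin n) ℝ) (hP : IsMonomial P) :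
    IsMonomial P⁻¹ ∧ P * P⁻¹ = 1 ∧ P⁻¹ * P = 1 := by
  obtain ⟨σ, d, hd, h⟩ := hP
  obtain ⟨h1, h2, h3⟩ := mono_inv P σ d hd h
  refine ⟨⟨σ⁻¹, fun j => (d (σ⁻¹ j))⁻¹, fun i => inv_pos.mpr (hd _), fun i j => ?_⟩, h1, h2⟩
  rw [h3]
  by_cases e : j = σ i
  · subst e; simp
  · have : ¬ i = σ⁻¹ j := by
      rintro rfl; simp at e
    rw [if_neg e, if_neg this]

theorem feas_conj {m n : ℕ} (M : Matrix (Fin m) (Fin n) ℝ)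
    (P : Matrix (Fin n) (Fin n) ℝ) (hP : IsMonomial P) (B : Matrix (Fin n) (Fin n) ℝ)
    (hB : TigrelFeasible M B) : TigrelFeasible (M * P) (P⁻¹ * B * P) := by
  obtain ⟨σ, d, hd, h⟩ := hP
  obtain ⟨h1, h2, h3⟩ := mono_inv P σ d hd h
  have e : ∀ i j, (P⁻¹ * B * P) i j = (d i)⁻¹ * B (σ i) (σ j) * d j := by
    intro i j
    rw [mono_mul_apply _ P σ d h]
    simp [Matrix.mul_apply, h3]
  refine ⟨fun i j => ?_, fun i => ?_, fun i j => ?_⟩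
  · rw [e]
    exact mul_nonneg (mul_nonneg (inv_pos.mpr (hd i)).le (hB.1 _ _)) (hd j).le
  · rw [e, hB.2.1]; simp
  · have : M * P * (P⁻¹ * B * P) = M * B * P := by
      simp only [Matrix.mul_assoc]
      rw [← Matrix.mul_assoc P P⁻¹, h1, Matrix.one_mul]
    rw [this, mono_mul_apply _ P σ d h, mono_mul_apply _ P σ d h]
    exact mul_le_mul_of_nonneg_right (hB.2.2 _ _) (hd j).le

theorem opt_col {m n : ℕ} (M : Matrix (Fin m) (Fin n) ℝ) (B B' : Matrix (Fin n) (Fin n) ℝ)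
    (hB : TigrelOpt M B) (hB' : TigrelFeasible M B') (j : Fin n) :
    ∑ i, ((M - M * B) i j) ^ 2 ≤ ∑ i, ((M - M * B') i j) ^ 2 := by
  let C : Matrix (Fin n) (Fin n) ℝ := fun k l => if l = j then B' k l else B k l
  have e : ∀ i l, (M * C) i l = if l = j then (M * B') i l else (M * B) i l := by
    intro i l
    have eC : ∀ k, C k l = if l = j then B' k l else B k l := fun k => rfl
    simp only [Matrix.mul_apply, eC]
    by_cases h : l = j <;> simp [h]
  have hC : TigrelFeasible M C := by
    refine ⟨fun i l => ?_, fun i => ?_, fun i l => ?_⟩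
    · by_cases h : l = j
      · simpa [C, h] using hB'.1 i j
      · simpa [C, h] using hB.1.1 i l
    · by_cases h : i = j
      · simpa [C, h] using hB'.2.1 j
      · simpa [C, h] using hB.1.2.1 i
    · rw [e]
      split_ifs
      · exact hB'.2.2 i l
      · exact hB.1.2.2 i l
  have key := hB.2 C hC
  unfold frobSq at key
  rw [Finset.sum_comm, Finset.sum_comm (f := fun i j => ((M - M * C) i j) ^ 2)] at key
  rw [← Finset.add_sum_erase _ _ (Finset.mem_univ j),
    ← Finset.add_sum_erase (a := j) _ (fun l => ∑ i, ((M - M * C) i l) ^ 2) (Finset.mem_univ j)] at key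
  have r : ∑ l ∈ Finset.univ.erase j, ∑ i, ((M - M * C) i l) ^ 2
      = ∑ l ∈ Finset.univ.erase j, ∑ i, ((M - M * B) i l) ^ 2 := by
    refine Finset.sum_congr rfl fun l hl => Finset.sum_congr rfl fun i _ => ?_
    rw [Matrix.sub_apply, e, if_neg (Finset.ne_of_mem_erase hl), Matrix.sub_apply]
  have r2 : ∑ i, ((M - M * C) i j) ^ 2 = ∑ i, ((M - M * B') i j) ^ 2 := by
    refine Finset.sum_congr rfl fun i _ => ?_
    rw [Matrix.sub_apply, e, if_pos rfl, Matrix.sub_apply]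
  rw [r, r2] at key
  linarith

theorem opt_conj {m n : ℕ} (M : Matrix (Fin m) (Fin n) ℝ)
    (P : Matrix (Fin n) (Fin n) ℝ) (hP : IsMonomial P) (B : Matrix (Fin n) (Fin n) ℝ)
    (hB : TigrelOpt M B) : TigrelOpt (M * P) (P⁻¹ * B * P) := by
  refine ⟨feas_conj M P hP B hB.1, fun C hC => ?_⟩
  obtain ⟨hQ, h1, h2⟩ := isMonomial_inv P hP
  have hinv : P⁻¹⁻¹ = P := Matrix.inv_eq_right_inv h2
  have hF := feas_conj (M * P) P⁻¹ hQ C hC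
  rw [hinv, Matrix.mul_assoc M, h1, Matrix.mul_one] at hF
  have e1 : M * P - M * P * (P⁻¹ * B * P) = (M - M * B) * P := by
    rw [Matrix.sub_mul]
    congr 1
    simp only [Matrix.mul_assoc]
    rw [← Matrix.mul_assoc P P⁻¹, h1, Matrix.one_mul]
  have e2 : M * P - M * P * C = (M - M * (P * C * P⁻¹)) * P := by
    rw [Matrix.sub_mul]
    congr 1
    simp only [Matrix.mul_assoc]
    rw [h2, Matrix.mul_one]
  rw [e1, e2]
  obtain ⟨σ, d, hd, h⟩ := hP
  unfold frobSq
  rw [Finset.sum_comm, Finset.sum_comm (f := fun i j => (((M - M * (P * C * P⁻¹)) * P) i j) ^ 2)]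
  refine Finset.sum_le_sum fun j _ => ?_
  simp only [mono_mul_apply _ P σ d h, mul_pow]
  rw [← Finset.sum_mul, ← Finset.sum_mul]
  exact mul_le_mul_of_nonneg_right (opt_col M B _ hB hF _) (sq_nonneg _)

theorem opt_unique {m n : ℕ} (M : Matrix (Fin m) (Fin n) ℝ) (B B' : Matrix (Fin n) (Fin n) ℝ)
    (hB : TigrelOpt M B) (hB' : TigrelOpt M B') : M * B = M * B' := by
  let D : Matrix (Fin n) (Fin n) ℝ := (1 / 2 : ℝ) • (B + B')
  have eD : ∀ i j, D i j = 1 / 2 * (B i j + B' i j) := fun i j => by simp [D]; ring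
  have e : ∀ i j, (M * D) i j = 1 / 2 * ((M * B) i j + (M * B') i j) := by
    intro i j
    simp [D, Matrix.mul_add]
    ring
  have hD : TigrelFeasible M D := by
    refine ⟨fun i j => ?_, fun i => ?_, fun i j => ?_⟩
    · rw [eD]; linarith [hB.1.1 i j, hB'.1.1 i j]
    · rw [eD]; linarith [hB.1.2.1 i, hB'.1.2.1 i]
    · rw [e]; linarith [hB.1.2.2 i j, hB'.1.2.2 i j]
  have k1 := hB.2 D hD
  have k2 := hB'.2 D hD
  have par : frobSq (M - M * D) = 1 / 2 * frobSq (M - M * B) + 1 / 2 * frobSq (M - M * B')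
      - 1 / 4 * frobSq (M * B - M * B') := by
    unfold frobSq
    simp only [Finset.mul_sum, ← Finset.sum_add_distrib, ← Finset.sum_sub_distrib]
    refine Finset.sum_congr rfl fun i _ => Finset.sum_congr rfl fun j _ => ?_
    simp only [Matrix.sub_apply, e]
    ring
  have z : frobSq (M * B - M * B') ≤ 0 := by linarith
  have nn : ∀ i ∈ Finset.univ, 0 ≤ ∑ j, ((M * B - M * B') i j) ^ 2 :=
    fun i _ => Finset.sum_nonneg fun j _ => sq_nonneg _
  have z0 := le_antisymm z (Finset.sum_nonneg nn)
  ext i j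
  have zi := (Finset.sum_eq_zero_iff_of_nonneg nn).mp z0 i (Finset.mem_univ i)
  have zj := (Finset.sum_eq_zero_iff_of_nonneg (fun j _ => sq_nonneg _)).mp zi j (Finset.mem_univ j)
  have := pow_eq_zero_iff (two_ne_zero) |>.mp zj
  rw [Matrix.sub_apply] at this
  linarith

/-- for a monomial matrix `P`, `B` is optimal for (tigrel) on `M` iff
`P⁻¹BP` is optimal for (tigrel) on `MP`; consequently `P(MP) = P(M)P`. -/
theorem stmt7 {m n : ℕ} (M : Matrix (Fin m) (Fin n) ℝ) (hM : ∀ i j, 0 ≤ M i j)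
    (P : Matrix (Fin n) (Fin n) ℝ) (hP : IsMonomial P) :
    (∀ B : Matrix (Fin n) (Fin n) ℝ,
      TigrelOpt M B ↔ TigrelOpt (M * P) (P⁻¹ * B * P)) ∧
    ∀ B C : Matrix (Fin n) (Fin n) ℝ, TigrelOpt M B → TigrelOpt (M * P) C →
      (M * P) * (1 - C) = (M * (1 - B)) * P := by
  obtain ⟨hQ, h1, h2⟩ := isMonomial_inv P hP
  have hinv : P⁻¹⁻¹ = P := Matrix.inv_eq_right_inv h2
  refine ⟨fun B => ⟨opt_conj M P hP B, fun h => ?_⟩, fun B C hB hC => ?_⟩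
  · have := opt_conj (M * P) P⁻¹ hQ _ h
    have e : P * (P⁻¹ * B * P) * P⁻¹ = B := by
      simp only [Matrix.mul_assoc]
      rw [h1, Matrix.mul_one, ← Matrix.mul_assoc, h1, Matrix.one_mul]
    rwa [hinv, e, Matrix.mul_assoc, h1, Matrix.mul_one] at this
  · have u := opt_unique _ _ _ hC (opt_conj M P hP B hB)
    rw [Matrix.mul_sub, u, Matrix.mul_sub, Matrix.sub_mul, Matrix.mul_one, Matrix.mul_one]
    congr 1
    simp only [Matrix.mul_assoc]
    rw [← Matrix.mul_assoc P P⁻¹, h1, Matrix.one_mul]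
end

section
/- Let M ∈ ℝ^{m×n} be entrywise nonnegative and i a column index. Then the i-th column of P(M) is zero if and only if M_{:i} belongs to the convex cone generated by the other columns of M, i.e., if and only if there exist nonnegative coefficients b_k ≥ 0 (k ≠ i) with M_{:i} = Σ_{k≠i} b_k M_{:k}. -/
open Matrix BigOperators

/-- the `i`-th column of `P(M)` is zero iff `M_{:i}` lies in the convex
cone generated by the other columns of `M`. -/
theorem stmt8 {m n : ℕ} (M : Matrix (Fin m) (Fin n) ℝ) (hM : ∀ i j, 0 ≤ M i j)
    (i : Fin n) (B : Matrix (Fin n) (Fin n) ℝ) (hB : TigrelOpt M B) :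
    (fun p => (M * (1 - B) : Matrix (Fin m) (Fin n) ℝ) p i) = 0 ↔
      ∃ b : Fin n → ℝ, (∀ k, 0 ≤ b k) ∧
        ∀ p, M p i = ∑ k ∈ Finset.univ.erase i, b k * M p k := by
  obtain ⟨⟨h0, hd, hle⟩, hopt⟩ := hB
  have hcol : ∀ p, (M * (1 - B) : Matrix (Fin m) (Fin n) ℝ) p i = M p i - (M * B) p i := by
    intro p
    rw [Matrix.mul_sub, Matrix.mul_one, Matrix.sub_apply]
  constructor
  · intro h
    refine ⟨fun k => B k i, fun k => h0 k i, fun p => ?_⟩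
    have h1 := congrFun h p
    simp only [hcol, Pi.zero_apply] at h1
    have h2 : (M * B) p i = ∑ k, B k i * M p k := by
      rw [Matrix.mul_apply]
      exact Finset.sum_congr rfl fun k _ => mul_comm _ _
    rw [← Finset.add_sum_erase _ _ (Finset.mem_univ i), hd i, zero_mul, zero_add] at h2
    linarith
  · rintro ⟨b, hb, hbM⟩
    funext p
    rw [hcol, Pi.zero_apply]
    by_contra hne
    let B' : Matrix (Fin n) (Fin n) ℝ :=
      fun k j => if j = i then (if k = i then 0 else b k) else B k j
    have hi : ∀ q, (M * B') q i = M q i := by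
      intro q
      rw [Matrix.mul_apply, ← Finset.add_sum_erase _ _ (Finset.mem_univ i), hbM q]
      simp only [B', if_true, mul_zero, zero_add]
      refine Finset.sum_congr rfl fun k hk => ?_
      rw [if_neg (Finset.ne_of_mem_erase hk), mul_comm]
    have hj : ∀ q j, j ≠ i → (M * B') q j = (M * B) q j := by
      intro q j hji
      rw [Matrix.mul_apply, Matrix.mul_apply]
      simp only [B', if_neg hji]
    have hfeas : TigrelFeasible M B' := by
      refine ⟨fun k j => ?_, fun k => ?_, fun q j => ?_⟩
      · simp only [B']
        split_ifs
        · exact le_rfl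
        · exact hb k
        · exact h0 k j
      · simp only [B']
        split_ifs
        · rfl
        · exact hd k
      · by_cases hji : j = i
        · rw [hji, hi]
        · rw [hj q j hji]
          exact hle q j
    have hpt : ∀ q j, ((M - M * B') q j) ^ 2 ≤ ((M - M * B) q j) ^ 2 := by
      intro q j
      by_cases hji : j = i
      · rw [hji, Matrix.sub_apply, hi, sub_self, zero_pow two_ne_zero]
        positivity
      · rw [Matrix.sub_apply, Matrix.sub_apply, hj q j hji]
    have hlt : frobSq (M - M * B') < frobSq (M - M * B) := by
      unfold frobSq
      refine Finset.sum_lt_sum (fun q _ => Finset.sum_le_sum fun j _ => hpt q j)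
        ⟨p, Finset.mem_univ p, Finset.sum_lt_sum (fun j _ => hpt p j) ⟨i, Finset.mem_univ i, ?_⟩⟩
      rw [Matrix.sub_apply, Matrix.sub_apply, hi, sub_self, zero_pow two_ne_zero]
      positivity
    exact absurd (hopt B' hfeas) (not_le.mpr hlt)
end

section
/- Let M ∈ ℝ^{m×n} be entrywise nonnegative such that the vertices of conv(θ(M)) are non-repeated. Then conv(θ(M)) ⊆ conv(θ(P(M))) ⊆ Δ^m ∩ col(θ(M)), where col(θ(M)) denotes the linear span of the columns of θ(M). -/
open Matrix BigOperators

lemma col_zero_of_sum {m n : ℕ} (M : Matrix (Fin m) (Fin n) ℝ) (hM : ∀ i j, 0 ≤ M i j)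
    (k : Fin n) (h : ∑ i, M i k = 0) : (fun i => M i k) = 0 := by
  funext i
  exact (Finset.sum_eq_zero_iff_of_nonneg (fun i _ => hM i k)).1 h i (Finset.mem_univ i)

lemma col_eq_smul {m n : ℕ} (M : Matrix (Fin m) (Fin n) ℝ) (hM : ∀ i j, 0 ≤ M i j)
    (k : Fin n) : (fun i => M i k) = (∑ i, M i k) • normCol M k := by
  have e : ∑ i, |M i k| = ∑ i, M i k := Finset.sum_congr rfl fun i _ => abs_of_nonneg (hM i k)
  by_cases h : ∑ i, M i k = 0
  · rw [h, zero_smul]; exact col_zero_of_sum M hM k h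
  · rw [normCol, e, smul_smul, mul_inv_cancel₀ h, one_smul]

lemma sum_pos_of_nz {m n : ℕ} (M : Matrix (Fin m) (Fin n) ℝ) (hM : ∀ i j, 0 ≤ M i j)
    (k : Fin n) (h : colNZ M k) : 0 < ∑ i, M i k :=
  lt_of_le_of_ne (Finset.sum_nonneg fun i _ => hM i k)
    fun h0 => h (col_zero_of_sum M hM k h0.symm)

lemma theta_simplex {m n : ℕ} (M : Matrix (Fin m) (Fin n) ℝ) (hM : ∀ i j, 0 ≤ M i j) :
    thetaCols M ⊆ stdSimplex ℝ (Fin m) := by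
  rintro x ⟨j, hj, rfl⟩
  have e : ∑ i, |M i j| = ∑ i, M i j := Finset.sum_congr rfl fun i _ => abs_of_nonneg (hM i j)
  have hp := sum_pos_of_nz M hM j hj
  refine ⟨fun i => ?_, ?_⟩
  · simp only [normCol, Pi.smul_apply, smul_eq_mul, e]
    exact mul_nonneg (inv_nonneg.2 hp.le) (hM i j)
  · simp only [normCol, Pi.smul_apply, smul_eq_mul, e, ← Finset.mul_sum]
    exact inv_mul_cancel₀ hp.ne'

lemma theta_finite {m n : ℕ} (M : Matrix (Fin m) (Fin n) ℝ) : (thetaCols M).Finite := by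
  refine (Set.finite_range (normCol M)).subset ?_
  rintro x ⟨j, -, rfl⟩
  exact ⟨j, rfl⟩

lemma col_mem_span {m n : ℕ} (M : Matrix (Fin m) (Fin n) ℝ) (hM : ∀ i j, 0 ≤ M i j)
    (k : Fin n) : (fun i => M i k) ∈ Submodule.span ℝ (thetaCols M) := by
  by_cases h : colNZ M k
  · rw [col_eq_smul M hM k]
    exact Submodule.smul_mem _ _ (Submodule.subset_span ⟨k, h, rfl⟩)
  · rw [not_not.1 h]; exact Submodule.zero_mem _

lemma P_col {m n : ℕ} (M : Matrix (Fin m) (Fin n) ℝ) (B : Matrix (Fin n) (Fin n) ℝ) (j : Fin n) :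
    (fun i => (M * (1 - B) : Matrix (Fin m) (Fin n) ℝ) i j) = (fun i => M i j) - ∑ k, B k j • (fun i => M i k) := by
  funext i
  rw [Matrix.mul_sub, Matrix.mul_one]
  simp [Matrix.sub_apply, Matrix.mul_apply, Finset.sum_apply, mul_comm]

lemma exists_vertex {m : ℕ} (Q : Set (Fin m → ℝ)) (hQ : IsCompact Q) (hne : Q.Nonempty)
    (f : StrongDual ℝ (Fin m → ℝ)) :
    ∃ v ∈ Q.extremePoints ℝ, ∀ y ∈ Q, f v ≤ f y := by
  have hE : IsExposed ℝ Q ((-f).toExposed Q) := ContinuousLinearMap.toExposed.isExposed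
  obtain ⟨z, hz, hmin⟩ := hQ.exists_isMinOn hne f.continuous.continuousOn
  have hEne : ((-f).toExposed Q).Nonempty := ⟨z, hz, fun y hy => by
    simpa using hmin hy⟩
  obtain ⟨v, hv⟩ := (hE.isCompact hQ).extremePoints_nonempty hEne
  refine ⟨v, hE.isExtreme.extremePoints_subset_extremePoints hv, fun y hy => ?_⟩
  have := (extremePoints_subset hv).2 y hy
  simpa using this

lemma vertex_contra {m n : ℕ} (M : Matrix (Fin m) (Fin n) ℝ) (hM : ∀ i j, 0 ≤ M i j)
    (B : Matrix (Fin n) (Fin n) ℝ) (hB : TigrelFeasible M B) (j : Fin n) (hj : colNZ M j)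
    (hext : normCol M j ∈ (convexHull ℝ (thetaCols M)).extremePoints ℝ)
    (huniq : ∀ k, colNZ M k → normCol M j = normCol M k → k = j)
    (hP : (fun i => M i j) = ∑ k, B k j • (fun i => M i k)) : False := by
  obtain ⟨hB0, hBd, -⟩ := hB
  have hs := sum_pos_of_nz M hM j hj
  set s : Fin n → ℝ := fun k => ∑ i, M i k with hsdef
  have hs0 : ∀ k, 0 ≤ s k := fun k => Finset.sum_nonneg fun i _ => hM i k
  have hsum : s j = ∑ k, B k j * s k := by
    have : ∀ i, M i j = ∑ k, B k j * M i k := fun i => by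
      have := congrFun hP i
      simpa [Finset.sum_apply] using this
    simp only [hsdef, Finset.mul_sum]
    rw [Finset.sum_comm]
    exact Finset.sum_congr rfl fun i _ => this i
  have hsj : s j ≠ 0 := hs.ne'
  let w : Fin n → ℝ := fun k => (s j)⁻¹ * (B k j * s k)
  have hw1 : ∑ k, w k = 1 := by
    simp only [w, ← Finset.mul_sum, ← hsum]; exact inv_mul_cancel₀ hsj
  have hv : normCol M j = ∑ k, w k • normCol M k := by
    have h1 : (s j) • normCol M j = ∑ k, (B k j * s k) • normCol M k := by
      rw [← col_eq_smul M hM j, hP]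
      refine Finset.sum_congr rfl fun k _ => ?_
      rw [mul_smul, ← col_eq_smul M hM k]
    have h2 := congrArg (fun x => (s j)⁻¹ • x) h1
    simpa [smul_smul, Finset.smul_sum, inv_mul_cancel₀ hsj, w] using h2
  have hne := ((convex_convexHull ℝ (thetaCols M)).mem_extremePoints_iff_mem_sdiff_convexHull_sdiff.1
    hext).2
  apply hne
  have hsub : ∀ g : Fin n → Fin m → ℝ, ∑ k, w k • g k =
      ∑ k ∈ Finset.univ.filter (fun k => w k ≠ 0), w k • g k := fun g => by
    symm
    apply Finset.sum_filter_of_ne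
    intro k _ hk h0
    exact hk (by rw [h0, zero_smul])
  have key : ∑ k, w k • normCol M k ∈
      convexHull ℝ (convexHull ℝ (thetaCols M) \ {normCol M j}) := by
    rw [hsub]
    refine (convex_convexHull ℝ _).sum_mem ?_ ?_ ?_
    · intro k _
      exact mul_nonneg (inv_nonneg.2 hs.le) (mul_nonneg (hB0 k j) (hs0 k))
    · rw [Finset.sum_filter_ne_zero]; exact hw1
    · intro k hk
      have hwk : w k ≠ 0 := (Finset.mem_filter.1 hk).2
      have hnz : colNZ M k := by
        intro h0
        apply hwk
        have : s k = 0 := Finset.sum_eq_zero fun i _ => congrFun h0 i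
        simp [w, this]
      refine subset_convexHull ℝ _ ⟨subset_convexHull ℝ _ ⟨k, hnz, rfl⟩, ?_⟩
      intro h
      have hkj : k = j := huniq k hnz (Set.mem_singleton_iff.1 h).symm
      apply hwk
      simp [w, hkj, hBd]
  rw [← hv] at key
  exact key

/-- if the vertices of `conv(θ(M))` are non-repeated, then
`conv(θ(M)) ⊆ conv(θ(P(M))) ⊆ Δ^m ∩ col(θ(M))`. -/
theorem stmt9 {m n : ℕ} (M : Matrix (Fin m) (Fin n) ℝ) (hM : ∀ i j, 0 ≤ M i j)
    (hvert : NonRepeatedVertices M)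
    (B : Matrix (Fin n) (Fin n) ℝ) (hB : TigrelOpt M B) :
    convexHull ℝ (thetaCols M) ⊆ convexHull ℝ (thetaCols (M * (1 - B))) ∧
    convexHull ℝ (thetaCols (M * (1 - B))) ⊆
      stdSimplex ℝ (Fin m) ∩ (Submodule.span ℝ (thetaCols M) : Set (Fin m → ℝ)) := by
  obtain ⟨hf, -⟩ := hB
  have hB0 := hf.1
  have hP : ∀ i j, 0 ≤ (M * (1 - B) : Matrix (Fin m) (Fin n) ℝ) i j := fun i j => by
    rw [Matrix.mul_sub, Matrix.mul_one, Matrix.sub_apply]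
    exact sub_nonneg.2 (hf.2.2 i j)
  constructor
  · intro x hx
    by_contra hxS
    obtain ⟨f, u, hfx, hfS⟩ := geometric_hahn_banach_point_closed
      (convex_convexHull ℝ (thetaCols (M * (1 - B))))
      ((theta_finite (M * (1 - B))).isClosed_convexHull ℝ) hxS
    obtain ⟨v, hv, hmin⟩ := exists_vertex _ ((theta_finite M).isCompact_convexHull ℝ) ⟨x, hx⟩ f
    obtain ⟨j, ⟨hj, rfl⟩, huniq⟩ := hvert v hv
    have hc : f (normCol M j) < u := (hmin x hx).trans_lt hfx
    have hcol : ∀ k, f (normCol M j) * ∑ i, M i k ≤ f (fun i => M i k) := fun k => by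
      by_cases hk : colNZ M k
      · rw [col_eq_smul M hM k, map_smul, smul_eq_mul, mul_comm, ← col_eq_smul M hM k]
        exact mul_le_mul_of_nonneg_left (hmin _ (subset_convexHull ℝ _ ⟨k, hk, rfl⟩))
          (sum_pos_of_nz M hM k hk).le
      · have h0 := not_not.1 hk
        have h1 : ∑ i, M i k = 0 := Finset.sum_eq_zero fun i _ => congrFun h0 i
        rw [h1, h0]; simp
    have hPj : u * ∑ i, (M * (1 - B) : Matrix (Fin m) (Fin n) ℝ) i j ≤ f (fun i => (M * (1 - B) : Matrix (Fin m) (Fin n) ℝ) i j) := by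
      by_cases hk : colNZ (M * (1 - B)) j
      · have hlt := hfS _ (subset_convexHull ℝ _ ⟨j, hk, rfl⟩)
        have h2 := mul_le_mul_of_nonneg_left hlt.le (sum_pos_of_nz _ hP j hk).le
        have h3 := congrArg f (col_eq_smul _ hP j)
        rw [map_smul, smul_eq_mul] at h3
        linarith
      · have h0 := not_not.1 hk
        have h1 : ∑ i, (M * (1 - B) : Matrix (Fin m) (Fin n) ℝ) i j = 0 := Finset.sum_eq_zero fun i _ => congrFun h0 i
        rw [h1, h0]; simp
    have hfP : f (fun i => (M * (1 - B) : Matrix (Fin m) (Fin n) ℝ) i j) =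
        f (fun i => M i j) - ∑ k, B k j * f (fun i => M i k) := by
      rw [P_col, map_sub, map_sum]; simp only [map_smul, smul_eq_mul]
    have hsP : ∑ i, (M * (1 - B) : Matrix (Fin m) (Fin n) ℝ) i j = ∑ i, M i j - ∑ k, B k j * ∑ i, M i k := by
      have : ∀ i, (M * (1 - B) : Matrix (Fin m) (Fin n) ℝ) i j = M i j - ∑ k, B k j * M i k := fun i => by
        have := congrFun (P_col M B j) i
        simpa [Finset.sum_apply] using this
      simp only [this, Finset.sum_sub_distrib, Finset.mul_sum]
      rw [Finset.sum_comm]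
    have hMj : f (fun i => M i j) = f (normCol M j) * ∑ i, M i j := by
      have h3 := congrArg f (col_eq_smul _ hM j)
      rw [map_smul, smul_eq_mul] at h3
      linarith
    have hle : f (normCol M j) * ∑ k, B k j * ∑ i, M i k ≤ ∑ k, B k j * f (fun i => M i k) := by
      rw [Finset.mul_sum]
      refine Finset.sum_le_sum fun k _ => ?_
      have := mul_le_mul_of_nonneg_left (hcol k) (hB0 k j)
      linarith
    have hp0 : 0 ≤ ∑ i, (M * (1 - B) : Matrix (Fin m) (Fin n) ℝ) i j := Finset.sum_nonneg fun i _ => hP i j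
    have hup : u * ∑ i, (M * (1 - B) : Matrix (Fin m) (Fin n) ℝ) i j ≤ f (normCol M j) * ∑ i, (M * (1 - B) : Matrix (Fin m) (Fin n) ℝ) i j := by
      rw [hfP, hMj] at hPj
      rw [hsP] at hPj ⊢
      linarith
    have hz : ∑ i, (M * (1 - B) : Matrix (Fin m) (Fin n) ℝ) i j = 0 := by nlinarith
    have hcz := col_zero_of_sum _ hP j hz
    rw [P_col] at hcz
    exact vertex_contra M hM B hf j hj hv (fun k hk h => huniq k ⟨hk, h⟩) (sub_eq_zero.1 hcz)
  · refine Set.subset_inter (convexHull_min (theta_simplex _ hP) (convex_stdSimplex ℝ _))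
      (convexHull_min ?_ (Submodule.convex _))
    rintro x ⟨j, -, rfl⟩
    refine Submodule.smul_mem _ _ ?_
    rw [P_col]
    exact Submodule.sub_mem _ (col_mem_span M hM j)
      (Submodule.sum_mem _ fun k _ => Submodule.smul_mem _ _ (col_mem_span M hM k))
end

section
/- Let M ∈ ℝ^{m×n} be entrywise nonnegative such that no column of M is a scalar multiple of another column. Then rank(P(M)) = rank(M) and rank₊(P(M)) ≥ rank₊(M). -/
open Matrix BigOperators

theorem aux_noClosed {m n : ℕ} (M : Matrix (Fin m) (Fin n) ℝ)
    (hnomult : ∀ i j : Fin n, i ≠ j → ∀ c : ℝ,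
      (fun p => M p i) ≠ c • fun p => M p j)
    (B : Matrix (Fin n) (Fin n) ℝ) (hB0 : ∀ i j, 0 ≤ B i j) (hBd : ∀ i, B i i = 0)
    (c : Fin n → ℝ) (hc : ∀ j, 0 < c j) (hcM : ∀ j, c j = ∑ p, M p j)
    (K : Finset (Fin n)) (hne : K.Nonempty) (h1 : ∀ j ∈ K, ∀ i, i ∉ K → B i j = 0)
    (h2 : ∀ j ∈ K, ∀ p, ∑ i, M p i * B i j = M p j) : False := by
  induction K using Finset.strongInduction with
  | H K ih =>
  have hcB : ∀ j ∈ K, ∑ i, c i * B i j = c j := by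
    intro j hj
    simp only [hcM, Finset.sum_mul]
    rw [Finset.sum_comm]
    exact Finset.sum_congr rfl fun p _ => h2 j hj p
  have key : ∀ p, ∃ t : ℝ, ∀ j ∈ K, M p j = t * c j := by
    intro p
    obtain ⟨k, hk, hmin⟩ := K.exists_min_image (fun j => M p j / c j) hne
    set t := M p k / c k with ht
    have hz : ∀ j ∈ K, t * c j ≤ M p j := by
      intro j hj
      have := hmin j hj
      rwa [le_div_iff₀ (hc j)] at this
    refine ⟨t, ?_⟩
    by_contra hcon
    push Not at hcon
    obtain ⟨l, hl, hlne⟩ := hcon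
    refine ih (K.filter fun j => M p j = t * c j) ?_ ?_ ?_ ?_
    · refine (Finset.filter_subset _ _).ssubset_of_ne ?_
      intro h
      rw [← h] at hl
      exact hlne (Finset.mem_filter.1 hl).2
    · refine ⟨k, Finset.mem_filter.2 ⟨hk, ?_⟩⟩
      rw [ht, div_mul_cancel₀ _ (hc k).ne']
    · intro j hj i hi
      obtain ⟨hj, hje⟩ := Finset.mem_filter.1 hj
      by_cases hiK : i ∈ K
      · have hnn : ∀ i ∈ Finset.univ, 0 ≤ (M p i - t * c i) * B i j := by
          intro i _
          by_cases hiK : i ∈ K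
          · exact mul_nonneg (sub_nonneg.2 (hz i hiK)) (hB0 i j)
          · rw [h1 j hj i hiK]; simp
        have hs : ∑ i, (M p i - t * c i) * B i j = 0 := by
          simp only [sub_mul, Finset.sum_sub_distrib, mul_assoc, ← Finset.mul_sum]
          rw [h2 j hj p, hcB j hj, hje, sub_self]
        have h0 := (Finset.sum_eq_zero_iff_of_nonneg hnn).1 hs i (Finset.mem_univ i)
        rcases mul_eq_zero.1 h0 with h0 | h0
        · exact (hi (Finset.mem_filter.2 ⟨hiK, sub_eq_zero.1 h0⟩)).elim
        · exact h0
      · exact h1 j hj i hiK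
    · intro j hj
      exact h2 j (Finset.mem_filter.1 hj).1
  choose t ht using key
  obtain ⟨k, hk⟩ := hne
  by_cases h : ∃ l ∈ K, l ≠ k
  · obtain ⟨l, hl, hlk⟩ := h
    refine hnomult l k hlk (c l / c k) ?_
    funext p
    simp only [Pi.smul_apply, smul_eq_mul]
    rw [ht p l hl, ht p k hk]
    have := (hc k).ne'
    field_simp
  · push Not at h
    have := hcB k hk
    rw [Finset.sum_eq_zero] at this
    · exact (hc k).ne this
    · intro i _
      by_cases hik : i = k
      · rw [hik, hBd]; simp
      · rw [h1 k hk i (fun hi => hik (h i hi))]; simp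

theorem aux_mono {m n : ℕ} (M : Matrix (Fin m) (Fin n) ℝ)
    (hnomult : ∀ i j : Fin n, i ≠ j → ∀ c : ℝ,
      (fun p => M p i) ≠ c • fun p => M p j)
    (B : Matrix (Fin n) (Fin n) ℝ) (hB : TigrelFeasible M B)
    (c : Fin n → ℝ) (hc : ∀ j, 0 < c j) (hcM : ∀ j, c j = ∑ p, M p j)
    (x : Fin n → ℝ) (hx : ∀ j, ∑ i, x i * B i j ≤ x j) : ∀ j, 0 ≤ x j := by
  obtain ⟨hB0, hBd, hMB⟩ := hB
  have hMB' : ∀ p j, ∑ i, M p i * B i j ≤ M p j := fun p j => by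
    simpa [Matrix.mul_apply] using hMB p j
  have hcB' : ∀ j, ∑ i, c i * B i j = ∑ p, ∑ i, M p i * B i j := by
    intro j
    simp only [hcM, Finset.sum_mul]
    rw [Finset.sum_comm]
  have hcB : ∀ j, ∑ i, c i * B i j ≤ c j := by
    intro j
    rw [hcB', hcM]
    exact Finset.sum_le_sum fun p _ => hMB' p j
  by_contra hcon
  push Not at hcon
  obtain ⟨l, hl⟩ := hcon
  obtain ⟨k, hk, hmin⟩ := Finset.univ.exists_min_image (fun j => x j / c j) ⟨l, Finset.mem_univ l⟩
  set t := x k / c k with ht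
  have ht0 : t < 0 := lt_of_le_of_lt (hmin l (Finset.mem_univ l)) (div_neg_of_neg_of_pos hl (hc l))
  have hz : ∀ j, t * c j ≤ x j := by
    intro j
    have := hmin j (Finset.mem_univ j)
    rwa [le_div_iff₀ (hc j)] at this
  have hnn : ∀ j, ∀ i ∈ Finset.univ, 0 ≤ (x i - t * c i) * B i j :=
    fun j i _ => mul_nonneg (sub_nonneg.2 (hz i)) (hB0 i j)
  have hexp : ∀ j, ∑ i, (x i - t * c i) * B i j
      = ∑ i, x i * B i j - t * ∑ i, c i * B i j := by
    intro j
    simp only [sub_mul, Finset.sum_sub_distrib, mul_assoc, ← Finset.mul_sum]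
  refine aux_noClosed M hnomult B hB0 hBd c hc hcM
    (Finset.univ.filter fun j => x j = t * c j) ?_ ?_ ?_
  · refine ⟨k, Finset.mem_filter.2 ⟨hk, ?_⟩⟩
    rw [ht, div_mul_cancel₀ _ (hc k).ne']
  · intro j hj i hi
    have hje := (Finset.mem_filter.1 hj).2
    have hs : ∑ i, (x i - t * c i) * B i j = 0 := by
      refine le_antisymm ?_ (Finset.sum_nonneg (hnn j))
      rw [hexp]
      nlinarith [hx j, hcB j]
    have h0 := (Finset.sum_eq_zero_iff_of_nonneg (hnn j)).1 hs i (Finset.mem_univ i)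
    rcases mul_eq_zero.1 h0 with h0 | h0
    · exact (hi (Finset.mem_filter.2 ⟨Finset.mem_univ i, sub_eq_zero.1 h0⟩)).elim
    · exact h0
  · intro j hj p
    have hje := (Finset.mem_filter.1 hj).2
    have hs := Finset.sum_nonneg (hnn j)
    rw [hexp] at hs
    have heq : ∑ i, c i * B i j = c j := by
      refine le_antisymm (hcB j) ?_
      by_contra hlt
      push Not at hlt
      nlinarith [hx j, mul_pos (neg_pos.2 ht0) (sub_pos.2 hlt)]
    rw [hcB', hcM] at heq
    exact (Finset.sum_eq_sum_iff_of_le fun p _ => hMB' p j).1 heq p (Finset.mem_univ p)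

/-- if no column of `M` is a scalar multiple of another, then
`rank(P(M)) = rank(M)` and `rank₊(P(M)) ≥ rank₊(M)`. -/
theorem stmt10 {m n : ℕ} (M : Matrix (Fin m) (Fin n) ℝ) (hM : ∀ i j, 0 ≤ M i j)
    (hnomult : ∀ i j : Fin n, i ≠ j → ∀ c : ℝ,
      (fun p => M p i) ≠ c • fun p => M p j)
    (B : Matrix (Fin n) (Fin n) ℝ) (hB : TigrelOpt M B) :
    (M * (1 - B)).rank = M.rank ∧ nnRank M ≤ nnRank (M * (1 - B)) := by
  have hfeas := hB.1
  by_cases hn : n ≤ 1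
  · have hB0 : B = 0 := by
      ext i j
      have : i = j := Fin.ext (by omega)
      rw [this, hfeas.2.1]; rfl
    simp [hB0]
  push Not at hn
  have hc : ∀ j, 0 < ∑ p, M p j := by
    intro j
    refine lt_of_le_of_ne (Finset.sum_nonneg fun p _ => hM p j) ?_
    intro h0
    have hz := (Finset.sum_eq_zero_iff_of_nonneg (fun p _ => hM p j)).1 h0.symm
    have : Nontrivial (Fin n) := Fin.nontrivial_iff_two_le.2 hn
    obtain ⟨l, hl⟩ := exists_ne j
    refine hnomult j l hl.symm 0 ?_
    funext p
    simpa using hz p (Finset.mem_univ p)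
  have mono := aux_mono M hnomult B hfeas (fun j => ∑ p, M p j) hc (fun _ => rfl)
  have mono' : ∀ x : Fin n → ℝ, (∀ j, 0 ≤ (x ᵥ* (1 - B)) j) → ∀ j, 0 ≤ x j := by
    intro x hx
    apply mono
    intro j
    have := hx j
    rw [Matrix.vecMul_sub, Matrix.vecMul_one] at this
    simpa [Matrix.vecMul, dotProduct] using this
  have hinj : Function.Injective (fun x : Fin n → ℝ => x ᵥ* (1 - B)) := by
    intro x y hxy
    have hxy' : x ᵥ* (1 - B) = y ᵥ* (1 - B) := hxy
    have a := mono' (x - y) (by intro j; rw [Matrix.sub_vecMul, hxy', sub_self]; simp)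
    have b := mono' (y - x) (by intro j; rw [Matrix.sub_vecMul, hxy', sub_self]; simp)
    funext j
    have a := a j
    have b := b j
    simp only [Pi.sub_apply] at a b
    linarith
  have hu : IsUnit (1 - B) := Matrix.vecMul_injective_iff_isUnit.1 hinj
  have hdet : IsUnit (1 - B).det := (Matrix.isUnit_iff_isUnit_det _).1 hu
  have hQ : ∀ i j, 0 ≤ (1 - B)⁻¹ i j := by
    intro i
    apply mono'
    intro j
    have : ((1 - B)⁻¹ * (1 - B)) i j = (1 : Matrix (Fin n) (Fin n) ℝ) i j := by
      rw [Matrix.nonsing_inv_mul _ hdet]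
    have e : ((1 - B)⁻¹ i ᵥ* (1 - B)) j = ((1 - B)⁻¹ * (1 - B)) i j := rfl
    rw [e, this, Matrix.one_apply]
    split_ifs <;> norm_num
  refine ⟨Matrix.rank_mul_eq_left_of_isUnit_det _ _ hdet, ?_⟩
  have hne : {r : ℕ | ∃ U : Matrix (Fin m) (Fin r) ℝ, ∃ V : Matrix (Fin r) (Fin n) ℝ,
      (∀ i j, 0 ≤ U i j) ∧ (∀ i j, 0 ≤ V i j) ∧ M * (1 - B) = U * V}.Nonempty := by
    refine ⟨n, M * (1 - B), 1, ?_, ?_, (Matrix.mul_one _).symm⟩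
    · intro i j
      rw [Matrix.mul_sub, Matrix.mul_one, Matrix.sub_apply]
      exact sub_nonneg.2 (hfeas.2.2 i j)
    · intro i j
      rw [Matrix.one_apply]
      split_ifs <;> norm_num
  have hmem := Nat.sInf_mem hne
  change nnRank (M * (1 - B)) ∈ _ at hmem
  generalize nnRank (M * (1 - B)) = r at hmem ⊢
  obtain ⟨U, V, hU, hV, hUV⟩ := hmem
  refine Nat.sInf_le ⟨U, V * (1 - B)⁻¹, hU, ?_, ?_⟩
  · intro i j
    rw [Matrix.mul_apply]
    exact Finset.sum_nonneg fun k _ => mul_nonneg (hV i k) (hQ k j)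
  · rw [← Matrix.mul_assoc, ← hUV, Matrix.mul_nonsing_inv_cancel_right _ _ hdet]
end

section
/- Let A be an m×n column stochastic matrix (A ≥ 0 entrywise and each column of A sums to one) and let B be an n×n matrix with B ≥ 0 entrywise, B_{ii} = 0 for all i, and AB ≤ A entrywise. Then Σ_k B_{ki} ≤ 1 for every column i, i.e., Q = I − B is diagonally dominant. Moreover, if A_{:i} does not belong to the convex hull of the other columns of A, then Σ_k B_{ki} < 1. -/
open Matrix BigOperators

/-- for column stochastic `A` and `B ≥ 0` with zero diagonal and
`AB ≤ A`, every column sum of `B` is at most one; it is strictly less than one for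
columns `i` with `A_{:i}` outside the convex hull of the other columns. -/
theorem stmt11 {m n : ℕ} (A : Matrix (Fin m) (Fin n) ℝ)
    (hA : ∀ i j, 0 ≤ A i j) (hstoch : ∀ j, ∑ i, A i j = 1)
    (B : Matrix (Fin n) (Fin n) ℝ) (hB : ∀ i j, 0 ≤ B i j)
    (hdiag : ∀ i, B i i = 0) (hAB : ∀ i j, (A * B) i j ≤ A i j) :
    (∀ i, ∑ k, B k i ≤ 1) ∧
    ∀ i : Fin n, (fun p => A p i) ∉
        convexHull ℝ {x : Fin m → ℝ | ∃ k : Fin n, k ≠ i ∧ x = fun p => A p k} →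
      ∑ k, B k i < 1 := by
  have hsum : ∀ i, ∑ p, (A * B) p i = ∑ k, B k i := by
    intro i
    simp only [Matrix.mul_apply]
    rw [Finset.sum_comm]
    refine Finset.sum_congr rfl fun k _ => ?_
    rw [← Finset.sum_mul, hstoch, one_mul]
  have hle : ∀ i, ∑ k, B k i ≤ 1 := by
    intro i
    rw [← hsum, ← hstoch i]
    exact Finset.sum_le_sum fun p _ => hAB p i
  refine ⟨hle, fun i hi => lt_of_le_of_ne (hle i) fun heq => hi ?_⟩
  have hcol : ∀ p, (A * B) p i = A p i := by
    have h := (Finset.sum_eq_sum_iff_of_le (s := Finset.univ)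
      (fun p _ => hAB p i)).1 (by rw [hsum, hstoch, heq])
    exact fun p => h p (Finset.mem_univ p)
  have hrep : (fun p => A p i) = ∑ k ∈ Finset.univ.erase i, B k i • (fun p => A p k) := by
    funext p
    rw [Finset.sum_apply, ← hcol p, Matrix.mul_apply,
      ← Finset.add_sum_erase _ _ (Finset.mem_univ i), hdiag, mul_zero, zero_add]
    exact Finset.sum_congr rfl fun k _ => by simp [mul_comm]
  rw [hrep]
  refine (convex_convexHull ℝ _).sum_mem (fun k _ => hB k i) ?_ ?_
  · rw [← heq, ← Finset.add_sum_erase _ _ (Finset.mem_univ i), hdiag, zero_add]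
  · exact fun k hk => subset_convexHull ℝ _ ⟨k, Finset.ne_of_mem_erase hk, rfl⟩
end

section
/- Let M ∈ ℝ^{m×n} be entrywise nonnegative such that no column of M is a scalar multiple of another column. Then every optimal solution B* of problem (tigrel) for M satisfies ρ(B*) < 1; consequently Q = I − B* is invertible and Q⁻¹ is entrywise nonnegative (Q is inverse positive). -/
open Matrix BigOperators

lemma tigrel_core {m n : ℕ} (M : Matrix (Fin m) (Fin n) ℝ) (hM : ∀ i j, 0 ≤ M i j)
    (hnomult : ∀ i j : Fin n, i ≠ j → ∀ c : ℝ,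
      (fun p => M p i) ≠ c • fun p => M p j)
    (B : Matrix (Fin n) (Fin n) ℝ) (hB : TigrelFeasible M B)
    (x : Fin n → ℝ) (hx : ∀ j, 0 ≤ x j) (hxB : ∀ k, x k ≤ ∑ j, B k j * x j) :
    ∀ j, x j = 0 := by
  obtain ⟨hB0, hBd, hMB⟩ := hB
  by_contra hcon
  push Not at hcon
  obtain ⟨j₀, hj₀⟩ := hcon
  -- another index exists
  have hex : ∃ j, j ≠ j₀ := by
    by_contra h
    push Not at h
    have h1 := hxB j₀
    have h2 : ∑ j, B j₀ j * x j = 0 :=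
      Finset.sum_eq_zero fun j _ => by rw [h j, hBd, zero_mul]
    exact hj₀ (le_antisymm (h1.trans h2.le) (hx _))
  have hnz : ∀ k, ∃ p, 0 < M p k := by
    intro k
    have : ∃ l, k ≠ l := by
      by_cases hk : k = j₀
      · obtain ⟨l, hl⟩ := hex
        exact ⟨l, by rw [hk]; exact hl.symm⟩
      · exact ⟨j₀, hk⟩
    obtain ⟨l, hl⟩ := this
    have h := hnomult k l hl 0
    by_contra hc
    push Not at hc
    exact h (by funext p; simp; exact le_antisymm (hc p) (hM p k))
  -- sums
  have e0 : ∀ p, ∑ k, M p k * (∑ j, B k j * x j - x k) = - ∑ j, (M p j - (M * B) p j) * x j := by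
    intro p
    simp only [mul_sub, sub_mul, Finset.sum_sub_distrib, Matrix.mul_apply, Finset.mul_sum,
      Finset.sum_mul]
    rw [Finset.sum_comm]
    simp only [mul_assoc]
    ring
  have n1 : ∀ p k, 0 ≤ M p k * (∑ j, B k j * x j - x k) := fun p k =>
    mul_nonneg (hM p k) (sub_nonneg.2 (hxB k))
  have n2 : ∀ p j, 0 ≤ (M p j - (M * B) p j) * x j := fun p j =>
    mul_nonneg (sub_nonneg.2 (hMB p j)) (hx j)
  have z1 : ∀ p k, M p k * (∑ j, B k j * x j - x k) = 0 := by
    intro p k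
    have a := Finset.sum_nonneg fun k (_ : k ∈ Finset.univ) => n1 p k
    have b := Finset.sum_nonneg fun k (_ : k ∈ Finset.univ) => n2 p k
    have c : ∑ k, M p k * (∑ j, B k j * x j - x k) = 0 := by linarith [e0 p]
    exact (Finset.sum_eq_zero_iff_of_nonneg fun k _ => n1 p k).1 c k (Finset.mem_univ _)
  have z2 : ∀ p j, (M * B) p j * x j = M p j * x j := by
    intro p j
    have a := Finset.sum_nonneg fun k (_ : k ∈ Finset.univ) => n1 p k
    have b := Finset.sum_nonneg fun k (_ : k ∈ Finset.univ) => n2 p k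
    have c : ∑ j, (M p j - (M * B) p j) * x j = 0 := by linarith [e0 p]
    have := (Finset.sum_eq_zero_iff_of_nonneg fun k _ => n2 p k).1 c j (Finset.mem_univ _)
    linarith
  have hfix : ∀ k, ∑ j, B k j * x j = x k := by
    intro k
    obtain ⟨p, hp⟩ := hnz k
    have := (mul_eq_zero.1 (z1 p k)).resolve_left hp.ne'
    linarith
  let s : Fin n → ℝ := fun k => ∑ p, M p k
  have hs : ∀ k, 0 < s k := fun k => by
    obtain ⟨p, hp⟩ := hnz k
    exact Finset.sum_pos' (fun p _ => hM p k) ⟨p, Finset.mem_univ _, hp⟩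
  have hz2 : ∀ p j, ∑ k, M p k * B k j * x j = M p j * x j := by
    intro p j
    rw [← z2, Matrix.mul_apply, Finset.sum_mul]
  have hz3 : ∀ j, ∑ k, s k * B k j * x j = s j * x j := by
    intro j
    simp only [s, Finset.sum_mul]
    rw [Finset.sum_comm]
    exact Finset.sum_congr rfl fun p _ => hz2 p j
  -- the key identity
  have key : ∀ p, ∑ j, ∑ k, s k * B k j * x j * (M p k / s k - M p j / s j) ^ 2 = 0 := by
    intro p
    have t : ∀ j k, s k * B k j * x j * (M p k / s k - M p j / s j) ^ 2 =
        (M p k ^ 2 / s k) * (B k j * x j) - 2 * (M p j / s j) * (M p k * B k j * x j)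
          + (M p j / s j) ^ 2 * (s k * B k j * x j) := by
      intro j k
      have := (hs k).ne'
      have := (hs j).ne'
      field_simp
      ring
    simp only [t, Finset.sum_add_distrib, Finset.sum_sub_distrib]
    rw [Finset.sum_comm]
    simp only [← Finset.mul_sum, hfix, hz2, hz3]
    rw [← Finset.sum_sub_distrib, ← Finset.sum_add_distrib]
    refine Finset.sum_eq_zero fun j _ => ?_
    have := (hs j).ne'
    field_simp
    ring
  have nn : ∀ p j k, 0 ≤ s k * B k j * x j * (M p k / s k - M p j / s j) ^ 2 := fun p j k =>
    mul_nonneg (mul_nonneg (mul_nonneg (hs k).le (hB0 k j)) (hx j)) (sq_nonneg _)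
  have each : ∀ p j k, s k * B k j * x j * (M p k / s k - M p j / s j) ^ 2 = 0 := by
    intro p j k
    have a := (Finset.sum_eq_zero_iff_of_nonneg fun j _ =>
      Finset.sum_nonneg fun k _ => nn p j k).1 (key p) j (Finset.mem_univ _)
    exact (Finset.sum_eq_zero_iff_of_nonneg fun k _ => nn p j k).1 a k (Finset.mem_univ _)
  have hk : ∃ k, s k * B k j₀ * x j₀ ≠ 0 := by
    by_contra h
    push Not at h
    have h1 := hz3 j₀
    rw [Finset.sum_eq_zero fun k _ => h k] at h1
    exact mul_ne_zero (hs j₀).ne' hj₀ h1.symm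
  obtain ⟨k, hk⟩ := hk
  have hne : k ≠ j₀ := by
    rintro rfl
    simp [hBd] at hk
  refine hnomult k j₀ hne (s k / s j₀) ?_
  funext p
  have h1 := pow_eq_zero_iff (two_ne_zero) |>.1 ((mul_eq_zero.1 (each p j₀ k)).resolve_left hk)
  have := (hs k).ne'
  have := (hs j₀).ne'
  simp only [Pi.smul_apply, smul_eq_mul]
  field_simp at h1 ⊢
  linarith

/-- if no column of `M` is a scalar multiple of another, every optimal
solution `B*` of (tigrel) has spectral radius `< 1`, so `Q = I − B*` is inverse
positive. -/
theorem stmt12 {m n : ℕ} (M : Matrix (Fin m) (Fin n) ℝ) (hM : ∀ i j, 0 ≤ M i j)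
    (hnomult : ∀ i j : Fin n, i ≠ j → ∀ c : ℝ,
      (fun p => M p i) ≠ c • fun p => M p j)
    (B : Matrix (Fin n) (Fin n) ℝ) (hB : TigrelOpt M B) :
    spectralRadius ℂ (B.map (fun x => (x : ℂ))) < 1 ∧
    IsUnit (1 - B).det ∧ ∀ i j, 0 ≤ (1 - B)⁻¹ i j := by
  have core := tigrel_core M hM hnomult B hB.1
  have hB0 := hB.1.1
  have hdet : IsUnit (1 - B).det := by
    rw [isUnit_iff_ne_zero]
    intro h
    obtain ⟨v, hv, h0⟩ := Matrix.exists_mulVec_eq_zero_iff.2 h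
    apply hv
    have h1 : ∀ k, v k = ∑ j, B k j * v j := by
      intro k
      have := congrFun h0 k
      rw [Matrix.sub_mulVec, Matrix.one_mulVec] at this
      simp only [Pi.sub_apply, Pi.zero_apply, Matrix.mulVec, dotProduct] at this
      linarith
    have h2 := core (fun j => |v j|) (fun j => abs_nonneg _) (fun k => by
      calc |v k| = |∑ j, B k j * v j| := by rw [← h1]
        _ ≤ ∑ j, |B k j * v j| := Finset.abs_sum_le_sum_abs _ _
        _ = ∑ j, B k j * |v j| := by simp only [abs_mul, abs_of_nonneg (hB0 _ _)])
    funext j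
    exact abs_eq_zero.1 (h2 j)
  refine ⟨?_, hdet, ?_⟩
  · have hlt : ∀ z ∈ spectrum ℂ (B.map (fun x => (x : ℂ))), ‖z‖ < 1 := by
      intro z hz
      by_contra hge
      push Not at hge
      rw [spectrum.mem_iff, Matrix.isUnit_iff_isUnit_det, isUnit_iff_ne_zero, not_not] at hz
      obtain ⟨v, hv, h0⟩ := Matrix.exists_mulVec_eq_zero_iff.2 hz
      apply hv
      have h1 : ∀ k, z * v k = ∑ j, (B k j : ℂ) * v j := by
        intro k
        have := congrFun h0 k
        rw [Matrix.sub_mulVec, Algebra.algebraMap_eq_smul_one, Matrix.smul_mulVec,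
          Matrix.one_mulVec] at this
        simp only [Pi.sub_apply, Pi.zero_apply, Pi.smul_apply, smul_eq_mul, Matrix.mulVec,
          dotProduct, Matrix.map_apply] at this
        exact sub_eq_zero.1 this
      have h2 := core (fun j => ‖v j‖) (fun j => norm_nonneg _) (fun k => by
        calc ‖v k‖ ≤ ‖z‖ * ‖v k‖ := le_mul_of_one_le_left (norm_nonneg _) hge
          _ = ‖∑ j, (B k j : ℂ) * v j‖ := by rw [← h1, norm_mul]
          _ ≤ ∑ j, ‖(B k j : ℂ) * v j‖ := norm_sum_le _ _
          _ = ∑ j, B k j * ‖v j‖ := by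
            simp only [norm_mul, Complex.norm_real, Real.norm_of_nonneg (hB0 _ _)])
      funext j
      exact norm_eq_zero.1 (h2 j)
    have hfin : (spectrum ℂ (B.map (fun x => (x : ℂ)))).Finite := Matrix.finite_spectrum _
    have : spectralRadius ℂ (B.map (fun x => (x : ℂ))) =
        hfin.toFinset.sup (fun z => (‖z‖₊ : ENNReal)) := by
      rw [Finset.sup_eq_iSup]
      simp [spectralRadius]
    rw [this, Finset.sup_lt_iff (by simp)]
    intro z hz
    have := hlt z (hfin.mem_toFinset.1 hz)
    exact_mod_cast this
  · intro i j
    have hinv := Matrix.mul_nonsing_inv (1 - B) hdet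
    set C := (1 - B)⁻¹ with hC
    have h1 : ∀ k, ∑ l, B k l * C l j ≤ C k j := by
      intro k
      have := congrFun (congrFun hinv k) j
      rw [Matrix.sub_mul, Matrix.one_mul, Matrix.sub_apply, Matrix.mul_apply] at this
      have h3 : (0 : ℝ) ≤ (1 : Matrix (Fin n) (Fin n) ℝ) k j := by
        rw [Matrix.one_apply]; split_ifs <;> norm_num
      linarith
    have h2 := core (fun k => max (-C k j) 0) (fun k => le_max_right _ _) (fun k => by
      apply max_le
      · have : ∑ l, B k l * (-C l j) ≤ ∑ l, B k l * max (-C l j) 0 :=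
          Finset.sum_le_sum fun l _ => mul_le_mul_of_nonneg_left (le_max_left _ _) (hB0 k l)
        simp only [mul_neg, Finset.sum_neg_distrib] at this
        linarith [h1 k]
      · exact Finset.sum_nonneg fun l _ => mul_nonneg (hB0 k l) (le_max_right _ _))
    have := (le_max_left _ _).trans (h2 i).le
    linarith
end

section
/- Let M ∈ ℝ^{m×n} be entrywise nonnegative such that the vertices of conv(θ(M)) are non-repeated. Then there exists an optimal solution B* ∈ B*(M) of problem (tigrel) with ρ(B*) < 1, i.e., such that Q = I − B* is invertible with Q⁻¹ entrywise nonnegative. -/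
open Matrix BigOperators

lemma aux_exists_c {n : ℕ} (B : Matrix (Fin n) (Fin n) ℝ) (u : Fin n → ℝ)
    (h : ∀ j, ∑ k, u k * B k j < u j) :
    ∃ c : ℝ, 0 ≤ c ∧ c < 1 ∧ ∀ j, ∑ k, u k * B k j ≤ c * u j := by
  have h1 : ∀ᶠ c in nhdsWithin (1:ℝ) (Set.Iio 1), ∀ j, ∑ k, u k * B k j < c * u j := by
    rw [Filter.eventually_all]
    intro j
    have hc : Filter.Tendsto (fun c : ℝ => c * u j) (nhdsWithin 1 (Set.Iio 1)) (nhds (1 * u j)) :=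
      ((continuous_id.mul continuous_const).tendsto (1:ℝ)).mono_left nhdsWithin_le_nhds
    exact hc.eventually (lt_mem_nhds (by simpa using h j))
  have h2 : ∀ᶠ c in nhdsWithin (1:ℝ) (Set.Iio 1), 0 < c :=
    nhdsWithin_le_nhds (lt_mem_nhds one_pos)
  obtain ⟨c, ⟨hc1, hc2⟩, hc3⟩ := ((h1.and h2).and self_mem_nhdsWithin).exists
  exact ⟨c, hc2.le, hc3, fun j => (hc1 j).le⟩

/-- if `x ≥ 0` and `t x ≤ B x` with `t > c` then `x = 0`. -/
lemma aux_zero {n : ℕ} (B : Matrix (Fin n) (Fin n) ℝ) (u : Fin n → ℝ)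
    (hu : ∀ j, 0 < u j) (c t : ℝ) (hct : c < t)
    (h : ∀ j, ∑ k, u k * B k j ≤ c * u j) (x : Fin n → ℝ) (hx : ∀ j, 0 ≤ x j)
    (hBx : ∀ k, t * x k ≤ ∑ j, B k j * x j) : ∀ j, x j = 0 := by
  have h1 : t * ∑ k, u k * x k ≤ c * ∑ k, u k * x k := by
    calc t * ∑ k, u k * x k = ∑ k, u k * (t * x k) := by
          rw [Finset.mul_sum]; exact Finset.sum_congr rfl fun k _ => by ring
      _ ≤ ∑ k, u k * ∑ j, B k j * x j :=
          Finset.sum_le_sum fun k _ => mul_le_mul_of_nonneg_left (hBx k) (hu k).le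
      _ = ∑ j, (∑ k, u k * B k j) * x j := by
          simp_rw [Finset.mul_sum, Finset.sum_mul]
          rw [Finset.sum_comm]
          exact Finset.sum_congr rfl fun k _ => Finset.sum_congr rfl fun j _ => by ring
      _ ≤ ∑ j, (c * u j) * x j :=
          Finset.sum_le_sum fun j _ => mul_le_mul_of_nonneg_right (h j) (hx j)
      _ = c * ∑ k, u k * x k := by
          rw [Finset.mul_sum]; exact Finset.sum_congr rfl fun k _ => by ring
  have hnn : ∀ k ∈ Finset.univ, 0 ≤ u k * x k := fun k _ => mul_nonneg (hu k).le (hx k)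
  have h2 : ∑ k, u k * x k = 0 := by
    have := Finset.sum_nonneg hnn
    nlinarith
  intro j
  have := (Finset.sum_eq_zero_iff_of_nonneg hnn).1 h2 j (Finset.mem_univ j)
  rcases mul_eq_zero.1 this with h | h
  · exact absurd h (hu j).ne'
  · exact h

lemma aux_nonneg {n : ℕ} (B : Matrix (Fin n) (Fin n) ℝ) (hB : ∀ i j, 0 ≤ B i j) (u : Fin n → ℝ)
    (hu : ∀ j, 0 < u j) (c : ℝ) (hct : c < 1)
    (h : ∀ j, ∑ k, u k * B k j ≤ c * u j) (x : Fin n → ℝ)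
    (hx : ∀ k, ∑ j, B k j * x j ≤ x k) : ∀ j, 0 ≤ x j := by
  have := aux_zero B u hu c 1 hct h (fun j => max (- x j) 0) (fun j => le_max_right _ _) ?_
  · intro j
    have h1 := this j
    have h2 := le_max_left (-x j) 0
    linarith
  · intro k
    have h1 : ∑ j, B k j * (- x j) ≤ ∑ j, B k j * max (-x j) 0 :=
      Finset.sum_le_sum fun j _ => mul_le_mul_of_nonneg_left (le_max_left _ _) (hB k j)
    have h2 : 0 ≤ ∑ j, B k j * max (-x j) 0 :=
      Finset.sum_nonneg fun j _ => mul_nonneg (hB k j) (le_max_right _ _)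
    have h3 : ∑ j, B k j * (- x j) = - ∑ j, B k j * x j := by simp
    rw [one_mul]
    refine max_le ?_ h2
    have := hx k
    linarith

lemma aux_main {n : ℕ} (B : Matrix (Fin n) (Fin n) ℝ) (hB : ∀ i j, 0 ≤ B i j) (u : Fin n → ℝ)
    (hu : ∀ j, 0 < u j) (h : ∀ j, ∑ k, u k * B k j < u j) :
    spectralRadius ℂ (B.map (fun x => (x : ℂ))) < 1 ∧
      IsUnit (1 - B).det ∧ ∀ i j, 0 ≤ (1 - B)⁻¹ i j := by
  obtain ⟨c, hc0, hc1, hc⟩ := aux_exists_c B u h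
  have hdet : IsUnit (1 - B).det := by
    rw [isUnit_iff_ne_zero]
    intro h0
    obtain ⟨v, hv, hv0⟩ := Matrix.exists_mulVec_eq_zero_iff.2 h0
    rw [Matrix.sub_mulVec, Matrix.one_mulVec, sub_eq_zero] at hv0
    have e : ∀ k, v k = ∑ j, B k j * v j := fun k => by
      conv_lhs => rw [hv0]
      rfl
    have p := aux_nonneg B hB u hu c hc1 hc v (fun k => (e k).ge)
    exact hv (funext (aux_zero B u hu c 1 hc1 hc v p (fun k => by rw [one_mul]; exact (e k).le)))
  refine ⟨?_, hdet, ?_⟩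
  · refine lt_of_le_of_lt (b := ENNReal.ofReal c) ?_ (by simpa using hc1)
    refine iSup₂_le fun μ hμ => ?_
    change ‖μ‖ₑ ≤ _
    rw [← ofReal_norm]
    apply ENNReal.ofReal_le_ofReal
    by_contra! hlt
    rw [spectrum.mem_iff, Matrix.isUnit_iff_isUnit_det, isUnit_iff_ne_zero, not_not] at hμ
    obtain ⟨v, hv, hv0⟩ := Matrix.exists_mulVec_eq_zero_iff.2 hμ
    rw [Matrix.sub_mulVec, sub_eq_zero] at hv0
    have e : ∀ k, μ * v k = ∑ j, (B k j : ℂ) * v j := fun k => by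
      have := congrFun hv0 k
      rw [Algebra.algebraMap_eq_smul_one, Matrix.smul_mulVec, Matrix.one_mulVec] at this
      simpa [Matrix.mulVec, dotProduct] using this
    apply hv
    have := aux_zero B u hu c ‖μ‖ hlt hc (fun k => ‖v k‖) (fun k => norm_nonneg _) (fun k => by
      rw [← norm_mul, e k]
      refine (norm_sum_le _ _).trans (Finset.sum_le_sum fun j _ => ?_)
      rw [norm_mul, Complex.norm_real, Real.norm_of_nonneg (hB k j)])
    exact funext fun k => norm_eq_zero.1 (this k)
  · intro i j
    refine aux_nonneg B hB u hu c hc1 hc (fun i => (1 - B)⁻¹ i j) (fun k => ?_) i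
    have := Matrix.mul_nonsing_inv _ hdet
    rw [sub_mul, one_mul] at this
    have h2 := congrFun (congrFun this k) j
    rw [Matrix.sub_apply, Matrix.mul_apply] at h2
    have h3 : (0:ℝ) ≤ (1 : Matrix (Fin n) (Fin n) ℝ) k j := by
      rw [Matrix.one_apply]; split_ifs <;> norm_num
    linarith

/-- the set of feasible columns, restricted to nonzero columns of `M` -/
def auxK {m n : ℕ} (M : Matrix (Fin m) (Fin n) ℝ) (j : Fin n) : Set (Fin n → ℝ) :=
  {b | (∀ k, 0 ≤ b k) ∧ b j = 0 ∧ (∀ k, ¬ colNZ M k → b k = 0) ∧ ∀ i, (M *ᵥ b) i ≤ M i j}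

lemma aux_w_pos {m n : ℕ} (M : Matrix (Fin m) (Fin n) ℝ) (hM : ∀ i j, 0 ≤ M i j) (k : Fin n)
    (hk : colNZ M k) : 0 < ∑ i, M i k := by
  have h0 := Finset.sum_nonneg (fun i (_ : i ∈ Finset.univ) => hM i k)
  refine lt_of_le_of_ne h0 fun h => hk ?_
  funext i
  exact (Finset.sum_eq_zero_iff_of_nonneg (fun i _ => hM i k)).1 h.symm i (Finset.mem_univ i)

lemma aux_sum {m n : ℕ} (M : Matrix (Fin m) (Fin n) ℝ) (b : Fin n → ℝ) :
    ∑ i, (M *ᵥ b) i = ∑ k, (∑ i, M i k) * b k := by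
  simp only [Matrix.mulVec, dotProduct]
  rw [Finset.sum_comm]
  simp_rw [Finset.sum_mul]

lemma auxK_compact {m n : ℕ} (M : Matrix (Fin m) (Fin n) ℝ) (hM : ∀ i j, 0 ≤ M i j) (j : Fin n) :
    IsCompact (auxK M j) := by
  have hsub : auxK M j ⊆ Set.Icc 0 (fun k => (∑ i, M i j) / (∑ i, M i k)) := by
    rintro b ⟨h1, h2, h3, h4⟩
    refine ⟨h1, fun k => ?_⟩
    by_cases hk : colNZ M k
    · have hw := aux_w_pos M hM k hk
      show b k ≤ _
      rw [le_div_iff₀ hw]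
      calc b k * ∑ i, M i k = (∑ i, M i k) * b k := mul_comm _ _
        _ ≤ ∑ k, (∑ i, M i k) * b k :=
            Finset.single_le_sum (f := fun k => (∑ i, M i k) * b k)
              (fun k _ => mul_nonneg (Finset.sum_nonneg fun i _ => hM i k) (h1 k))
              (Finset.mem_univ k)
        _ = ∑ i, (M *ᵥ b) i := (aux_sum M b).symm
        _ ≤ ∑ i, M i j := Finset.sum_le_sum fun i _ => h4 i
    · rw [h3 k hk]
      exact div_nonneg (Finset.sum_nonneg fun i _ => hM i j) (Finset.sum_nonneg fun i _ => hM i k)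
  refine isCompact_Icc.of_isClosed_subset ?_ hsub
  have hc : ∀ i, Continuous fun b : Fin n → ℝ => (M *ᵥ b) i := fun i => by
    simp only [Matrix.mulVec, dotProduct]; fun_prop
  simp only [auxK, Set.ofPred_and, Set.ofPred_forall]
  refine IsClosed.inter ?_ (IsClosed.inter ?_ (IsClosed.inter ?_ ?_))
  · exact isClosed_iInter fun k => isClosed_le continuous_const (continuous_apply k)
  · exact isClosed_eq (continuous_apply j) continuous_const
  · exact isClosed_iInter fun k => isClosed_iInter fun _ =>
      isClosed_eq (continuous_apply k) continuous_const
  · exact isClosed_iInter fun i => isClosed_le (hc i) continuous_const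

/-- per-column optimum -/
lemma aux_col_opt {m n : ℕ} (M : Matrix (Fin m) (Fin n) ℝ) (hM : ∀ i j, 0 ≤ M i j) (j : Fin n) :
    ∃ b : Fin n → ℝ, (∀ k, 0 ≤ b k) ∧ b j = 0 ∧ (∀ i, (M *ᵥ b) i ≤ M i j) ∧
      ∀ b' : Fin n → ℝ, (∀ k, 0 ≤ b' k) → b' j = 0 → (∀ i, (M *ᵥ b') i ≤ M i j) →
        ∑ i, (M i j - (M *ᵥ b) i) ^ 2 ≤ ∑ i, (M i j - (M *ᵥ b') i) ^ 2 := by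
  classical
  have hc : Continuous fun b : Fin n → ℝ => ∑ i, (M i j - (M *ᵥ b) i) ^ 2 := by
    simp only [Matrix.mulVec, dotProduct]; fun_prop
  have hne : (auxK M j).Nonempty :=
    ⟨0, fun _ => le_rfl, rfl, fun _ _ => rfl, fun i => by simpa using hM i j⟩
  obtain ⟨b, ⟨h1, h2, h3, h4⟩, hmin⟩ := (auxK_compact M hM j).exists_isMinOn hne hc.continuousOn
  refine ⟨b, h1, h2, h4, fun b' g1 g2 g4 => ?_⟩
  have e : M *ᵥ (fun k => if colNZ M k then b' k else 0) = M *ᵥ b' := by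
    funext i
    simp only [Matrix.mulVec, dotProduct]
    refine Finset.sum_congr rfl fun k _ => ?_
    split_ifs with hk
    · rfl
    · have : M i k = 0 := congrFun (not_not.1 hk) i
      simp [this]
  have := hmin (a := fun k => if colNZ M k then b' k else 0)
    ⟨fun k => by beta_reduce; split_ifs; exacts [g1 k, le_rfl], by simp [g2], fun k hk => by simp [hk],
      fun i => by rw [e]; exact g4 i⟩
  simpa only [Set.mem_ofPred_eq, e] using this

lemma aux_normCol {m n : ℕ} (M : Matrix (Fin m) (Fin n) ℝ) (hM : ∀ i j, 0 ≤ M i j) (j : Fin n) :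
    normCol M j = (∑ i, M i j)⁻¹ • fun i => M i j := by
  unfold normCol
  simp_rw [abs_of_nonneg (hM _ _)]

def auxV {m n : ℕ} (M : Matrix (Fin m) (Fin n) ℝ) (j : Fin n) : Prop :=
  colNZ M j ∧ normCol M j ∈ Set.extremePoints ℝ (convexHull ℝ (thetaCols M))

lemma aux_vertex {m n : ℕ} (M : Matrix (Fin m) (Fin n) ℝ) (hM : ∀ i j, 0 ≤ M i j)
    (hvert : NonRepeatedVertices M) (j : Fin n) (hj : auxV M j) (b : Fin n → ℝ)
    (hb : ∀ k, 0 ≤ b k) (hbj : b j = 0) (he : ∀ i, (M *ᵥ b) i = M i j) : False := by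
  classical
  set w : Fin n → ℝ := fun k => ∑ i, M i k with hw
  have hw0 : ∀ k, colNZ M k → 0 < w k := aux_w_pos M hM
  have hwj := hw0 j hj.1
  have hwn : ∀ k, 0 ≤ w k := fun k => Finset.sum_nonneg fun i _ => hM i k
  set S : Set (Fin m → ℝ) := {x | ∃ k, k ≠ j ∧ colNZ M k ∧ x = normCol M k} with hS
  have hST : S ⊆ thetaCols M := by rintro x ⟨k, _, h1, h2⟩; exact ⟨k, h1, h2⟩
  have hmem : normCol M j ∈ convexHull ℝ S := by
    have hsum : ∑ k, w k * b k = w j := by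
      rw [← aux_sum]; exact Finset.sum_congr rfl fun i _ => he i
    set F := Finset.univ.filter (fun k => k ≠ j ∧ colNZ M k) with hF
    have hout : ∀ k, k ∉ F → ∀ i, M i k * b k = 0 := by
      intro k hk i
      by_cases h : k = j
      · rw [h, hbj, mul_zero]
      · have : ¬ colNZ M k := fun h' => hk (by simp [hF, h, h'])
        have : M i k = 0 := congrFun (not_not.1 this) i
        rw [this, zero_mul]
    have hx : normCol M j = ∑ k ∈ F, (w k * b k / w j) • normCol M k := by
      funext i
      rw [Finset.sum_apply, aux_normCol M hM j]
      simp only [Pi.smul_apply, smul_eq_mul]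
      rw [← he i]
      simp only [Matrix.mulVec, dotProduct]
      rw [← Finset.sum_subset (Finset.subset_univ F) (fun k _ hk => hout k hk i), Finset.mul_sum]
      refine Finset.sum_congr rfl fun k hk => ?_
      have hk' := hw0 k (by simpa [hF] using (Finset.mem_filter.1 hk).2.2)
      rw [aux_normCol M hM k]
      simp only [Pi.smul_apply, smul_eq_mul]
      change (w j)⁻¹ * _ = w k * b k / w j * ((w k)⁻¹ * M i k)
      field_simp
    rw [hx]
    refine (convex_convexHull ℝ S).sum_mem ?_ ?_ ?_
    · exact fun k _ => div_nonneg (mul_nonneg (hwn k) (hb k)) hwj.le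
    · rw [← Finset.sum_div, Finset.sum_subset (Finset.subset_univ F), hsum, div_self hwj.ne']
      intro k _ hk
      show (∑ i, M i k) * b k = 0
      rw [Finset.sum_mul]
      exact Finset.sum_eq_zero fun i _ => hout k hk i
    · intro k hk
      have := (Finset.mem_filter.1 hk).2
      exact subset_convexHull ℝ S ⟨k, this.1, this.2, rfl⟩
  have h1 : normCol M j ∈ Set.extremePoints ℝ (convexHull ℝ S) :=
    inter_extremePoints_subset_extremePoints_of_subset (convexHull_mono hST) ⟨hmem, hj.2⟩
  obtain ⟨k, hkj, hk, hke⟩ := extremePoints_convexHull_subset h1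
  obtain ⟨l, _, hl⟩ := hvert _ hj.2
  exact hkj ((hl k ⟨hk, hke⟩).trans (hl j ⟨hj.1, rfl⟩).symm)

lemma aux_nonvertex {m n : ℕ} (M : Matrix (Fin m) (Fin n) ℝ) (hM : ∀ i j, 0 ≤ M i j)
    (j : Fin n) : ∃ b : Fin n → ℝ, (∀ k, 0 ≤ b k) ∧ (∀ k, ¬ auxV M k → b k = 0) ∧
      ∀ i, (M *ᵥ b) i = M i j := by
  classical
  by_cases hj : colNZ M j
  swap
  · refine ⟨0, fun _ => le_rfl, fun _ _ => rfl, fun i => ?_⟩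
    have : M i j = 0 := congrFun (not_not.1 hj) i
    simp [this]
  have hwj := aux_w_pos M hM j hj
  have hfin : (thetaCols M).Finite := by
    refine (Set.finite_range (normCol M)).subset ?_
    rintro x ⟨k, _, rfl⟩; exact ⟨k, rfl⟩
  have hcomp : IsCompact (convexHull ℝ (thetaCols M)) := hfin.isCompact_convexHull ℝ
  have hKM := closure_convexHull_extremePoints hcomp (convex_convexHull ℝ _)
  have hext : (Set.extremePoints ℝ (convexHull ℝ (thetaCols M))).Finite :=
    hfin.subset extremePoints_convexHull_subset
  rw [(hext.isClosed_convexHull ℝ).closure_eq] at hKM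
  have hmem : normCol M j ∈ convexHull ℝ (thetaCols M) := subset_convexHull ℝ _ ⟨j, hj, rfl⟩
  rw [← hKM] at hmem
  set C : Set (Fin m → ℝ) := {x | ∃ b : Fin n → ℝ, (∀ k, 0 ≤ b k) ∧ (∀ k, ¬ auxV M k → b k = 0) ∧
      M *ᵥ b = x} with hC
  have hCc : Convex ℝ C := by
    rintro x ⟨b, h1, h2, rfl⟩ y ⟨b', h1', h2', rfl⟩ s t hs ht _
    refine ⟨s • b + t • b', fun k => ?_, fun k hk => ?_, ?_⟩
    · exact add_nonneg (mul_nonneg hs (h1 k)) (mul_nonneg ht (h1' k))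
    · simp [h2 k hk, h2' k hk]
    · rw [Matrix.mulVec_add, Matrix.mulVec_smul, Matrix.mulVec_smul]
  have hsub : Set.extremePoints ℝ (convexHull ℝ (thetaCols M)) ⊆ C := by
    intro x hx
    obtain ⟨k, hk, rfl⟩ := extremePoints_convexHull_subset hx
    have hwk := aux_w_pos M hM k hk
    refine ⟨Pi.single k (∑ i, M i k)⁻¹, fun l => ?_, fun l hl => ?_, ?_⟩
    · by_cases h : l = k
      · subst h; simpa using hwk.le
      · simp [h]
    · have : l ≠ k := by rintro rfl; exact hl ⟨hk, hx⟩
      simp [this]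
    · rw [aux_normCol M hM k]
      funext i
      simp [Matrix.mulVec_single, mul_comm]
  obtain ⟨b, h1, h2, h3⟩ := convexHull_min hsub hCc hmem
  refine ⟨(∑ i, M i j) • b, fun k => mul_nonneg hwj.le (h1 k), fun k hk => by simp [h2 k hk],
    fun i => ?_⟩
  rw [Matrix.mulVec_smul, h3, aux_normCol M hM j, smul_smul, mul_inv_cancel₀ hwj.ne', one_smul]


/-- if the vertices of `conv(θ(M))` are non-repeated, there exists an
optimal solution `B*` of (tigrel) with `ρ(B*) < 1`, i.e. `Q = I − B*` is inverse
positive. -/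
theorem stmt13 {m n : ℕ} (M : Matrix (Fin m) (Fin n) ℝ) (hM : ∀ i j, 0 ≤ M i j)
    (hvert : NonRepeatedVertices M) :
    ∃ B : Matrix (Fin n) (Fin n) ℝ, TigrelOpt M B ∧
      spectralRadius ℂ (B.map (fun x => (x : ℂ))) < 1 ∧
      IsUnit (1 - B).det ∧ ∀ i j, 0 ≤ (1 - B)⁻¹ i j := by
  classical
  have key : ∀ j, ∃ b : Fin n → ℝ, (∀ k, 0 ≤ b k) ∧ b j = 0 ∧ (∀ i, (M *ᵥ b) i ≤ M i j) ∧
      (∀ b' : Fin n → ℝ, (∀ k, 0 ≤ b' k) → b' j = 0 → (∀ i, (M *ᵥ b') i ≤ M i j) →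
        ∑ i, (M i j - (M *ᵥ b) i) ^ 2 ≤ ∑ i, (M i j - (M *ᵥ b') i) ^ 2) ∧
      (¬ auxV M j → ∀ k, ¬ auxV M k → b k = 0) := by
    intro j
    by_cases hj : auxV M j
    · obtain ⟨b, h1, h2, h3, h4⟩ := aux_col_opt M hM j
      exact ⟨b, h1, h2, h3, h4, fun h => absurd hj h⟩
    · obtain ⟨b, h1, h2, h3⟩ := aux_nonvertex M hM j
      refine ⟨b, h1, h2 j hj, fun i => (h3 i).le, fun b' _ _ _ => ?_, fun _ => h2⟩
      simp only [h3, sub_self]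
      simpa using Finset.sum_nonneg fun i _ => sq_nonneg (M i j - (M *ᵥ b') i)
  choose b hb0 hbj hbM hbopt hbV using key
  set B : Matrix (Fin n) (Fin n) ℝ := fun k j => b j k with hBdef
  have hMB : ∀ i j, (M * B) i j = (M *ᵥ b j) i := fun i j => rfl
  have hopt : TigrelOpt M B := by
    refine ⟨⟨fun i j => hb0 j i, fun i => hbj i, fun i j => hbM j i⟩, ?_⟩
    rintro B' ⟨g1, g2, g3⟩
    unfold frobSq
    rw [Finset.sum_comm, Finset.sum_comm (f := fun i j => ((M - M * B') i j) ^ 2)]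
    refine Finset.sum_le_sum fun j _ => ?_
    exact hbopt j (fun k => B' k j) (fun k => g1 k j) (g2 j) (fun i => g3 i j)
  refine ⟨B, hopt, ?_⟩
  set w : Fin n → ℝ := fun k => ∑ i, M i k with hw
  have hwn : ∀ k, 0 ≤ w k := fun k => Finset.sum_nonneg fun i _ => hM i k
  have hle : ∀ j, ∑ k, w k * B k j ≤ w j := fun j => by
    have := aux_sum M (b j)
    calc ∑ k, w k * B k j = ∑ i, (M *ᵥ b j) i := this.symm
      _ ≤ w j := Finset.sum_le_sum fun i _ => hbM j i
  have hlt : ∀ j, auxV M j → ∑ k, w k * B k j < w j := fun j hj => by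
    refine lt_of_le_of_ne (hle j) fun heq => ?_
    refine aux_vertex M hM hvert j hj (b j) (hb0 j) (hbj j) fun i => ?_
    have e : ∑ i, (M *ᵥ b j) i = ∑ i, M i j := (aux_sum M (b j)).trans heq
    exact (Finset.sum_eq_sum_iff_of_le (fun i _ => hbM j i)).1 e i (Finset.mem_univ i)
  have hε : ∃ ε : ℝ, 0 < ε ∧ ∀ j, auxV M j →
      ∑ k, (w k + ε * if auxV M k then 0 else 1) * B k j < w j := by
    have h1 : ∀ᶠ ε in nhdsWithin (0:ℝ) (Set.Ioi 0), ∀ j, auxV M j →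
        ∑ k, (w k + ε * if auxV M k then 0 else 1) * B k j < w j := by
      rw [Filter.eventually_all]
      intro j
      by_cases hj : auxV M j
      · have hc : Continuous fun ε : ℝ => ∑ k, (w k + ε * if auxV M k then 0 else 1) * B k j := by
          fun_prop
        have h2 := (hc.tendsto 0).eventually_lt_const (u := w j) (by simpa using hlt j hj)
        exact nhdsWithin_le_nhds (h2.mono fun ε h _ => h)
      · exact Filter.Eventually.of_forall fun ε h => absurd h hj
    obtain ⟨ε, h2, h3⟩ := (h1.and self_mem_nhdsWithin).exists
    exact ⟨ε, h3, h2⟩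
  obtain ⟨ε, hε0, hε⟩ := hε
  refine aux_main B (fun i j => hb0 j i) (fun k => w k + ε * if auxV M k then 0 else 1) ?_ ?_
  · intro j
    by_cases hj : auxV M j
    · simpa [hj] using aux_w_pos M hM j hj.1
    · simp only [hj, if_false, mul_one]
      exact add_pos_of_nonneg_of_pos (hwn j) hε0
  · intro j
    by_cases hj : auxV M j
    · simpa only [hj, if_true, mul_zero, add_zero] using hε j hj
    · have : ∑ k, (w k + ε * if auxV M k then 0 else 1) * B k j = ∑ k, w k * B k j := by
        refine Finset.sum_congr rfl fun k _ => ?_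
        by_cases hk : auxV M k
        · simp [hk]
        · have : B k j = 0 := hbV j hj k hk
          simp [this]
      rw [this]
      simp only [hj, if_false, mul_one]
      linarith [hle j]
end

section
/- Let M ∈ ℝ^{m×n} be an entrywise nonnegative matrix with rank(M) = 2 whose columns are pairwise not scalar multiples of each other. Then rank₊(M) = 2 and the preprocessed matrix P(M) has exactly two nonzero columns S_{:1}, S_{:2}, and there exists an entrywise nonnegative 2×n matrix R with M = [S_{:1} S_{:2}] R; i.e., the preprocessing identifies an optimal nonnegative basis for the NMF problem associated with M. -/
open Matrix BigOperators

theorem aux_span {m n : ℕ} (M : Matrix (Fin m) (Fin n) ℝ)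
    (hrank : M.rank = 2)
    (hnomult : ∀ i j : Fin n, i ≠ j → ∀ c : ℝ,
      (fun p => M p i) ≠ c • fun p => M p j) (a b : Fin n) (hab : a ≠ b) (k : Fin n) :
    ∃ α β : ℝ, ∀ p, M p k = α * M p a + β * M p b := by
  have hane : (fun p => M p a) ≠ 0 := by
    have := hnomult a b hab 0
    simpa using this
  have hli : LinearIndependent ℝ ![(fun p => M p a), (fun p => M p b)] := by
    rw [LinearIndependent.pair_iff' hane]
    intro c hc
    exact hnomult b a hab.symm c hc.symm
  have hr := M.rank_eq_finrank_span_cols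
  rw [hrank] at hr
  have hle : Submodule.span ℝ (Set.range ![(fun p => M p a), (fun p => M p b)]) ≤
      Submodule.span ℝ (Set.range M.col) := by
    apply Submodule.span_mono
    rintro _ ⟨i, rfl⟩
    fin_cases i
    · exact ⟨a, rfl⟩
    · exact ⟨b, rfl⟩
  have heq := Submodule.eq_of_le_of_finrank_eq hle (by
    rw [← hr, finrank_span_eq_card hli]; simp)
  have hk : M.col k ∈ Submodule.span ℝ (Set.range M.col) := Submodule.subset_span ⟨k, rfl⟩
  rw [← heq] at hk
  simp only [Matrix.range_cons, Matrix.range_empty, Set.union_empty, Set.singleton_union] at hk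
  obtain ⟨α, β, h⟩ := Submodule.mem_span_pair.1 hk
  refine ⟨α, β, fun p => ?_⟩
  have := congrFun h p
  simpa using this.symm

theorem aux_extreme {m n : ℕ} (M : Matrix (Fin m) (Fin n) ℝ) (hM : ∀ i j, 0 ≤ M i j)
    (hrank : M.rank = 2)
    (hnomult : ∀ i j : Fin n, i ≠ j → ∀ c : ℝ,
      (fun p => M p i) ≠ c • fun p => M p j) :
    ∃ j₁ j₂ : Fin n, j₁ ≠ j₂ ∧ ∃ A C : Fin n → ℝ, (∀ k, 0 ≤ A k) ∧ (∀ k, 0 ≤ C k) ∧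
      ∀ k p, M p k = A k * M p j₁ + C k * M p j₂ := by
  have hn : 2 ≤ n := by
    have := M.rank_le_width
    omega
  let a : Fin n := ⟨0, by omega⟩
  let b : Fin n := ⟨1, by omega⟩
  have hab : a ≠ b := by simp [a, b]
  let L : Fin n → ℝ := fun k => ∑ p, M p k
  have hLpos : ∀ k, 0 < L k := by
    intro k
    have hk : (fun p => M p k) ≠ 0 := by
      by_cases h : k = a
      · subst h; simpa using hnomult a b hab 0
      · simpa using hnomult k a h 0
    obtain ⟨p, hp⟩ := Function.ne_iff.1 hk
    exact Finset.sum_pos' (fun i _ => hM i k)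
      ⟨p, Finset.mem_univ _, lt_of_le_of_ne (hM p k) (Ne.symm hp)⟩
  choose α β h using aux_span M hrank hnomult a b hab
  have hLk : ∀ k, L k = α k * L a + β k * L b := by
    intro k
    simp only [L, Finset.mul_sum, ← Finset.sum_add_distrib]
    exact Finset.sum_congr rfl fun p _ => h k p
  let t : Fin n → ℝ := fun k => β k * L b / L k
  let d : Fin m → ℝ := fun p => M p b / L b - M p a / L a
  have hx : ∀ k p, M p k = L k * (M p a / L a + t k * d p) := by
    intro k p
    have h1 := (hLpos k).ne'
    have h2 := (hLpos a).ne'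
    have h3 := (hLpos b).ne'
    have h4 : L k * t k = β k * L b := by simp only [t]; field_simp
    have h5 : L k - L k * t k = α k * L a := by rw [h4, hLk k]; ring
    have : L k * (M p a / L a + t k * d p) =
      (L k - L k * t k) * (M p a / L a) + (L k * t k) * (M p b / L b) := by
      simp only [d]; ring
    rw [this, h5, h4, h k p]
    field_simp
  obtain ⟨j₁, -, h1⟩ := Finset.exists_min_image Finset.univ t ⟨a, Finset.mem_univ _⟩
  obtain ⟨j₂, -, h2⟩ := Finset.exists_max_image Finset.univ t ⟨a, Finset.mem_univ _⟩
  have hlt : t j₁ < t j₂ := by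
    by_contra hc
    push Not at hc
    have hc' : ∀ k, t k = t j₁ := fun k =>
      le_antisymm ((h2 k (Finset.mem_univ _)).trans hc) (h1 k (Finset.mem_univ _))
    apply hnomult a b hab (L a / L b)
    funext p
    have h3 := (hLpos b).ne'
    simp only [Pi.smul_apply, smul_eq_mul]
    rw [hx b p]
    have e := hx a p
    rw [hc' a] at e
    rw [hc' b]
    field_simp
    field_simp at e
    linarith
  refine ⟨j₁, j₂, fun h => by rw [h] at hlt; exact lt_irrefl _ hlt,
    fun k => L k * (t j₂ - t k) / (L j₁ * (t j₂ - t j₁)),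
    fun k => L k * (t k - t j₁) / (L j₂ * (t j₂ - t j₁)), ?_, ?_, ?_⟩
  · intro k
    exact div_nonneg (mul_nonneg (hLpos k).le (sub_nonneg.2 (h2 k (Finset.mem_univ _))))
      (mul_nonneg (hLpos _).le (sub_nonneg.2 hlt.le))
  · intro k
    exact div_nonneg (mul_nonneg (hLpos k).le (sub_nonneg.2 (h1 k (Finset.mem_univ _))))
      (mul_nonneg (hLpos _).le (sub_nonneg.2 hlt.le))
  · intro k p
    have e1 := (hLpos j₁).ne'
    have e2 := (hLpos j₂).ne'
    have e3 : t j₂ - t j₁ ≠ 0 := (sub_pos.2 hlt).ne'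
    rw [hx k p, hx j₁ p, hx j₂ p]
    generalize M p a / L a = x
    field_simp
    ring

theorem aux_apply {m n : ℕ} (M : Matrix (Fin m) (Fin n) ℝ) (B : Matrix (Fin n) (Fin n) ℝ)
    (p : Fin m) (j : Fin n) : (M * (1 - B) : Matrix (Fin m) (Fin n) ℝ) p j = M p j - (M * B) p j := by
  rw [Matrix.mul_sub, Matrix.mul_one, Matrix.sub_apply]

theorem aux_key_s16 {m n : ℕ} (M : Matrix (Fin m) (Fin n) ℝ) (hM : ∀ i j, 0 ≤ M i j)
    (hnomult : ∀ i j : Fin n, i ≠ j → ∀ c : ℝ,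
      (fun p => M p i) ≠ c • fun p => M p j)
    (B : Matrix (Fin n) (Fin n) ℝ) (hB : TigrelFeasible M B)
    (j₁ j₂ : Fin n) (hj : j₁ ≠ j₂) (A C : Fin n → ℝ) (hC : ∀ k, 0 ≤ C k)
    (h : ∀ k p, M p k = A k * M p j₁ + C k * M p j₂) :
    ∃ s t : ℝ, 0 < s ∧ 0 ≤ t ∧ (∀ p, (M * (1 - B) : Matrix (Fin m) (Fin n) ℝ) p j₁ = s * M p j₁ - t * M p j₂) ∧
      ∃ p, 0 < (M * (1 - B) : Matrix (Fin m) (Fin n) ℝ) p j₁ := by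
  obtain ⟨hB0, hBd, hBM⟩ := hB
  have ht : 0 ≤ ∑ k, C k * B k j₁ := Finset.sum_nonneg fun k _ => mul_nonneg (hC k) (hB0 _ _)
  have hP : ∀ p, (M * (1 - B) : Matrix (Fin m) (Fin n) ℝ) p j₁ =
      (1 - ∑ k, A k * B k j₁) * M p j₁ - (∑ k, C k * B k j₁) * M p j₂ := by
    intro p
    rw [aux_apply, Matrix.mul_apply]
    have : ∑ k, M p k * B k j₁ = (∑ k, A k * B k j₁) * M p j₁ + (∑ k, C k * B k j₁) * M p j₂ := by
      rw [Finset.sum_mul, Finset.sum_mul, ← Finset.sum_add_distrib]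
      refine Finset.sum_congr rfl fun k _ => ?_
      rw [h k p]; ring
    rw [this]; ring
  have hpos : ∃ p, 0 < (M * (1 - B) : Matrix (Fin m) (Fin n) ℝ) p j₁ := by
    by_contra hc
    push Not at hc
    have hz : ∀ p, (M * (1 - B) : Matrix (Fin m) (Fin n) ℝ) p j₁ = 0 := fun p =>
      le_antisymm (hc p) (by rw [aux_apply]; linarith [hBM p j₁])
    by_cases ht0 : ∑ k, C k * B k j₁ = 0
    · have hB' : ∀ k, B k j₁ = 0 := by
        intro k
        by_cases hk : k = j₁
        · rw [hk]; exact hBd _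
        · have := (Finset.sum_eq_zero_iff_of_nonneg
            (fun k _ => mul_nonneg (hC k) (hB0 k j₁))).1 ht0 k (Finset.mem_univ _)
          rcases mul_eq_zero.1 this with h0 | h0
          · exfalso
            apply hnomult k j₁ hk (A k)
            funext p
            simp [h k p, h0]
          · exact h0
      apply hnomult j₁ j₂ hj 0
      funext p
      have := hP p
      rw [hz p] at this
      simp [hB'] at this
      simp [← this]
    · apply hnomult j₂ j₁ hj.symm ((1 - ∑ k, A k * B k j₁) / ∑ k, C k * B k j₁)
      funext p
      have := hP p
      rw [hz p] at this
      simp only [Pi.smul_apply, smul_eq_mul]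
      rw [div_mul_eq_mul_div, eq_div_iff ht0]
      linarith
  refine ⟨_, _, ?_, ht, hP, hpos⟩
  obtain ⟨p, hp⟩ := hpos
  rw [hP p] at hp
  by_contra hs
  push Not at hs
  have := mul_nonneg ht (hM p j₂)
  have := mul_nonneg (neg_nonneg.2 hs) (hM p j₁)
  linarith

theorem aux_opt {m n : ℕ} (M : Matrix (Fin m) (Fin n) ℝ)
    (B : Matrix (Fin n) (Fin n) ℝ) (hB : TigrelOpt M B) (j : Fin n) (c : Fin n → ℝ)
    (hc : ∀ k, 0 ≤ c k) (hcj : c j = 0) (hMc : ∀ p, ∑ k, M p k * c k = M p j) :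
    ¬ colNZ (M * (1 - B)) j := by
  obtain ⟨⟨hB0, hBd, hBM⟩, hopt⟩ := hB
  let B' := B.updateCol j c
  have e1 : ∀ p, (M * B') p j = M p j := by
    intro p; rw [← hMc p, Matrix.mul_apply]; simp [B']
  have e2 : ∀ p k, k ≠ j → (M * B') p k = (M * B) p k := by
    intro p k hk; simp [Matrix.mul_apply, B', Matrix.updateCol_ne hk]
  have hf : TigrelFeasible M B' := by
    refine ⟨fun i k => ?_, fun i => ?_, fun i k => ?_⟩
    · by_cases hk : k = j
      · subst hk; simpa [B'] using hc i
      · simpa [B', Matrix.updateCol_ne hk] using hB0 i k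
    · by_cases hk : i = j
      · subst hk; simpa [B'] using hcj
      · simpa [B', Matrix.updateCol_ne hk] using hBd i
    · by_cases hk : k = j
      · subst hk; exact (e1 i).le
      · rw [e2 i k hk]; exact hBM i k
  intro hnz
  obtain ⟨p, hp⟩ := Function.ne_iff.1 hnz
  replace hp : (M * (1 - B) : Matrix (Fin m) (Fin n) ℝ) p j ≠ 0 := hp
  rw [aux_apply] at hp
  refine absurd (hopt B' hf) (not_le.2 ?_)
  have hle : ∀ i k, ((M - M * B') i k) ^ 2 ≤ ((M - M * B) i k) ^ 2 := by
    intro i k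
    by_cases hk : k = j
    · subst hk; rw [Matrix.sub_apply, e1]; simp; positivity
    · rw [Matrix.sub_apply, Matrix.sub_apply, e2 i k hk]
  refine Finset.sum_lt_sum (fun i _ => Finset.sum_le_sum fun k _ => hle i k)
    ⟨p, Finset.mem_univ _, Finset.sum_lt_sum (fun k _ => hle p k) ⟨j, Finset.mem_univ _, ?_⟩⟩
  rw [Matrix.sub_apply, Matrix.sub_apply, e1]
  have := sq_pos_of_ne_zero hp
  simpa using this

theorem aux_inv {m : ℕ} (x y S T : Fin m → ℝ) (s t u v : ℝ) (hu : 0 < u)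
    (ht : 0 ≤ t) (hx : ∀ p, 0 ≤ x p)
    (hS : ∀ p, S p = s * x p - t * y p) (hT : ∀ p, T p = u * y p - v * x p)
    (hS0 : ∀ p, 0 ≤ S p) (hT0 : ∀ p, 0 ≤ T p) (hSp : ∃ p, 0 < S p) : 0 < s * u - t * v := by
  obtain ⟨p, hp⟩ := hSp
  have e : u * S p + t * T p = (s * u - t * v) * x p := by rw [hS, hT]; ring
  have h1 : 0 < (s * u - t * v) * x p := by
    rw [← e]
    have := mul_pos hu hp
    have := mul_nonneg ht (hT0 p)
    linarith
  by_contra hc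
  push Not at hc
  have := mul_nonneg (neg_nonneg.2 hc) (hx p)
  linarith

/-- a rank-two nonnegative matrix whose columns are pairwise not scalar
multiples of each other has `rank₊(M) = 2`, and `P(M)` has exactly two nonzero
columns `S_{:1}, S_{:2}` with `M = [S_{:1} S_{:2}] R` for some `R ≥ 0`. -/
theorem stmt16 {m n : ℕ} (M : Matrix (Fin m) (Fin n) ℝ) (hM : ∀ i j, 0 ≤ M i j)
    (hrank : M.rank = 2)
    (hnomult : ∀ i j : Fin n, i ≠ j → ∀ c : ℝ,
      (fun p => M p i) ≠ c • fun p => M p j)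
    (B : Matrix (Fin n) (Fin n) ℝ) (hB : TigrelOpt M B) :
    nnRank M = 2 ∧
    ∃ j₁ j₂ : Fin n, j₁ ≠ j₂ ∧
      colNZ (M * (1 - B)) j₁ ∧ colNZ (M * (1 - B)) j₂ ∧
      (∀ j, colNZ (M * (1 - B)) j → j = j₁ ∨ j = j₂) ∧
      ∃ R : Matrix (Fin 2) (Fin n) ℝ, (∀ i j, 0 ≤ R i j) ∧
        M = (Matrix.of fun (p : Fin m) (k : Fin 2) =>
              (M * (1 - B) : Matrix (Fin m) (Fin n) ℝ) p (if k = 0 then j₁ else j₂)) * R := by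
  have hfeas := hB.1
  obtain ⟨j₁, j₂, hj, A, C, hA, hC, h⟩ := aux_extreme M hM hrank hnomult
  obtain ⟨s, t, hs, ht, hS, hSp⟩ := aux_key_s16 M hM hnomult B hfeas j₁ j₂ hj A C hC h
  obtain ⟨u, v, hu, hv, hT, hTp⟩ := aux_key_s16 M hM hnomult B hfeas j₂ j₁ hj.symm C A hA
    (fun k p => by rw [h k p]; ring)
  have hP0 : ∀ p j, 0 ≤ (M * (1 - B) : Matrix (Fin m) (Fin n) ℝ) p j := by
    intro p j
    rw [aux_apply]
    linarith [hfeas.2.2 p j]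
  have hD := aux_inv (fun p => M p j₁) (fun p => M p j₂) (fun p => (M * (1 - B) : Matrix (Fin m) (Fin n) ℝ) p j₁)
    (fun p => (M * (1 - B) : Matrix (Fin m) (Fin n) ℝ) p j₂) s t u v hu ht (fun p => hM p j₁) hS hT
    (fun p => hP0 p j₁) (fun p => hP0 p j₂) hSp
  have hnz : ∀ j, (∃ p, 0 < (M * (1 - B) : Matrix (Fin m) (Fin n) ℝ) p j) → colNZ (M * (1 - B)) j := by
    rintro j ⟨p, hp⟩ h0
    exact hp.ne' (congrFun h0 p)
  have hR : ∃ R : Matrix (Fin 2) (Fin n) ℝ, (∀ i j, 0 ≤ R i j) ∧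
        M = (Matrix.of fun (p : Fin m) (k : Fin 2) =>
              (M * (1 - B) : Matrix (Fin m) (Fin n) ℝ) p (if k = 0 then j₁ else j₂)) * R := by
    refine ⟨Matrix.of fun i k => if i = 0 then (A k * u + C k * v) / (s * u - t * v)
      else (A k * t + C k * s) / (s * u - t * v), ?_, ?_⟩
    · intro i k
      have h1 := hA k
      have h2 := hC k
      simp only [Matrix.of_apply]
      split_ifs <;> positivity
    · ext p k
      rw [Matrix.mul_apply, Fin.sum_univ_two]
      simp only [Matrix.of_apply, if_true, one_ne_zero, if_false]
      rw [hS, hT, h k p]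
      have := hD.ne'
      field_simp
      ring
  refine ⟨?_, j₁, j₂, hj, hnz _ hSp, hnz _ hTp, ?_, hR⟩
  · obtain ⟨R, hR0, hR1⟩ := hR
    apply le_antisymm
    · exact Nat.sInf_le ⟨_, R, fun i j => hP0 _ _, hR0, hR1⟩
    · refine le_csInf ⟨2, _, R, fun i j => hP0 _ _, hR0, hR1⟩ ?_
      rintro r ⟨U, V, -, -, hUV⟩
      rw [← hrank, hUV]
      exact (Matrix.rank_mul_le_left U V).trans U.rank_le_width
  · intro j hjnz
    by_contra hcon
    push Not at hcon
    obtain ⟨n1, n2⟩ := hcon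
    refine aux_opt M B hB j (Pi.single j₁ (A j) + Pi.single j₂ (C j)) ?_ ?_ ?_ hjnz
    · intro k
      have h1 : (0 : Fin n → ℝ) ≤ Pi.single j₁ (A j) := Pi.single_nonneg.2 (hA j)
      have h2 : (0 : Fin n → ℝ) ≤ Pi.single j₂ (C j) := Pi.single_nonneg.2 (hC j)
      exact add_nonneg (h1 k) (h2 k)
    · simp [n1, n2]
    · intro p
      simp only [Pi.add_apply, mul_add, Finset.sum_add_distrib]
      simp [Pi.single_apply]
      rw [h j p]; ring
end
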